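/- arXiv:1905.10973 — 6 statements merged into one kernel-verified Lean document; each statement's English description precedes it below -/
import Mathlib

section
/- Fix an integer n ≥ 2 and a sequence a = (a_1,…,a_n) of nonnegative integers. Call a Tesler matrix associated to a two-diagonal if m_{ij} = 0 whenever j > i+1. Then the map sending a two-diagonal Tesler matrix M to the sequence μ = (μ_1,…,μ_{n−1}) defined by μ_{i−1} = m_{ii} + m_{i+1,i+1} + ⋯ + m_{nn} for 2 ≤ i ≤ n is a bijection from the set of two-diagonal Tesler matrices associated to a onto the set of partitions μ contained in λ(a). -/
open Finset

/-- A Tesler matrix associated to the sequence `a`. -/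
def IsTesler (n : ℕ) (a : Fin n → ℕ) (M : Fin n → Fin n → ℕ) : Prop :=
  (∀ i j : Fin n, j < i → M i j = 0) ∧
    ∀ i : Fin n,
      M i i + ∑ j ∈ univ.filter (fun j => j < i), M j i
        = a i + ∑ j ∈ univ.filter (fun j => i < j), M i j

/-- A Tesler matrix is two-diagonal if `m i j = 0` whenever `j > i + 1`. -/
def TwoDiag (n : ℕ) (M : Fin n → Fin n → ℕ) : Prop :=
  ∀ i j : Fin n, (i : ℕ) + 1 < (j : ℕ) → M i j = 0

/-- The partition `λ(a) = (a_2 + ⋯ + a_n, a_3 + ⋯ + a_n, …, a_n)`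
(0-indexed: `lam n a k = a_{k+2} + ⋯ + a_n`). -/
def lam (n : ℕ) (a : Fin n → ℕ) (k : Fin (n - 1)) : ℕ :=
  ∑ i ∈ univ.filter (fun i : Fin n => (k : ℕ) < (i : ℕ)), a i

/-- The map sending `M` to the sequence of partial diagonal sums
`μ_{i-1} = m_{ii} + m_{i+1,i+1} + ⋯ + m_{nn}` for `2 ≤ i ≤ n`. -/
def diagSums (n : ℕ) (M : Fin n → Fin n → ℕ) (k : Fin (n - 1)) : ℕ :=
  ∑ i ∈ univ.filter (fun i : Fin n => (k : ℕ) < (i : ℕ)), M i i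

/-!
Adding the Tesler equations of the rows `i, …, n` telescopes: the superdiagonal entries between
consecutive rows cancel, leaving `∑_{j ≥ i} m_jj + m_{i-1,i} = ∑_{j ≥ i} a_j`. Hence a two-diagonal
matrix with diagonal sums `μ` is Tesler iff its trace is `∑ a` and its superdiagonal is `λ(a) - μ`.
Given `μ ⊆ λ(a)`, the diagonal is recovered as the consecutive differences of
`(∑ a, μ_1, …, μ_{n-1}, 0)`.
-/

variable {m : ℕ}

section TailSums

variable {α : Type*}

lemma sum_Ici_last [AddCommMonoid α] (f : Fin (m + 1) → α) :
    ∑ j ∈ Ici (Fin.last m), f j = f (Fin.last m) := by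
  rw [← Fin.top_eq_last, Ici_top, sum_singleton]

lemma sum_Ici_castSucc [AddCommMonoid α] (f : Fin (m + 1) → α) (k : Fin m) :
    ∑ j ∈ Ici k.castSucc, f j = f k.castSucc + ∑ j ∈ Ici k.succ, f j := by
  have Ioi_castSucc : Ioi k.castSucc = Ici k.succ := by
    ext j
    simp only [mem_Ioi, mem_Ici, Fin.castSucc_lt_iff_succ_le]
  rw [← add_sum_Ioi_eq_sum_Ici, Ioi_castSucc]

/- `p i` is what row `i` receives from row `i - 1`, and `q i` what it passes on to row `i + 1`. -/
lemma forall_add_eq_add_iff_forall_sum_Ici_add [AddCancelCommMonoid α] {d a p q : Fin (m + 1) → α}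
    (q_last : q (Fin.last m) = 0) (q_castSucc : ∀ k : Fin m, q k.castSucc = p k.succ) :
    (∀ i, d i + p i = a i + q i) ↔ ∀ i, ∑ j ∈ Ici i, d j + p i = ∑ j ∈ Ici i, a j := by
  have balance_last : d (Fin.last m) + p (Fin.last m) = a (Fin.last m) + q (Fin.last m) ↔
      ∑ j ∈ Ici (Fin.last m), d j + p (Fin.last m) = ∑ j ∈ Ici (Fin.last m), a j := by
    rw [sum_Ici_last, sum_Ici_last, q_last, add_zero]
  have balance_castSucc (k : Fin m)
      (tail : ∑ j ∈ Ici k.succ, d j + p k.succ = ∑ j ∈ Ici k.succ, a j) :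
      d k.castSucc + p k.castSucc = a k.castSucc + q k.castSucc ↔
        ∑ j ∈ Ici k.castSucc, d j + p k.castSucc = ∑ j ∈ Ici k.castSucc, a j := by
    rw [sum_Ici_castSucc, sum_Ici_castSucc, ← tail, q_castSucc, add_right_comm,
      add_left_comm (a k.castSucc), add_comm (∑ j ∈ Ici k.succ, d j), add_left_inj]
  constructor <;> intro h i
  · induction i using Fin.reverseInduction with
    | last => exact balance_last.1 (h _)
    | cast k tail => exact (balance_castSucc k tail).1 (h _)
  · induction i using Fin.lastCases with
    | last => exact balance_last.2 (h _)
    | cast k => exact (balance_castSucc k (h _)).2 (h _)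

/-- The consecutive differences `t_i - t_{i+1}` of a finite sequence continued by zero: the inverse
of taking tail sums. -/
def tailDiff [Sub α] (t : Fin (m + 1) → α) : Fin (m + 1) → α :=
  Fin.lastCases (t (Fin.last m)) fun k => t k.castSucc - t k.succ

lemma tailDiff_last [Sub α] (t : Fin (m + 1) → α) :
    tailDiff t (Fin.last m) = t (Fin.last m) :=
  Fin.lastCases_last

lemma tailDiff_castSucc [Sub α] (t : Fin (m + 1) → α) (k : Fin m) :
    tailDiff t k.castSucc = t k.castSucc - t k.succ :=
  Fin.lastCases_castSucc k

variable [AddCommMonoid α] [PartialOrder α] [Sub α] [OrderedSub α]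

lemma tailDiff_sum_Ici [AddLeftReflectLE α] (f : Fin (m + 1) → α) :
    tailDiff (fun i => ∑ j ∈ Ici i, f j) = f := by
  funext i
  cases i using Fin.lastCases with
  | last => rw [tailDiff_last, sum_Ici_last]
  | cast k => rw [tailDiff_castSucc, sum_Ici_castSucc, add_tsub_cancel_right]

lemma sum_Ici_tailDiff [AddLeftMono α] [ExistsAddOfLE α] {t : Fin (m + 1) → α}
    (ht : Antitone t) (i : Fin (m + 1)) : ∑ j ∈ Ici i, tailDiff t j = t i := by
  induction i using Fin.reverseInduction with
  | last => rw [sum_Ici_last, tailDiff_last]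
  | cast k ih =>
    rw [sum_Ici_castSucc, tailDiff_castSucc, ih,
      tsub_add_cancel_of_le (ht (Fin.castSucc_lt_succ (i := k)).le)]

end TailSums

lemma antitone_cons {α : Type*} [Preorder α] {x : α} {f : Fin m → α} (hf : Antitone f)
    (hx : ∀ k, f k ≤ x) : Antitone (Fin.cons x f : Fin (m + 1) → α) := by
  intro i j hij
  cases j using Fin.cases with
  | zero => rw [Fin.le_zero_iff.1 hij]
  | succ l =>
    cases i using Fin.cases with
    | zero => simpa only [Fin.cons_zero, Fin.cons_succ] using hx l
    | succ k => simpa only [Fin.cons_succ] using hf (Fin.succ_le_succ_iff.1 hij)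

lemma lam_antitone (n : ℕ) (a : Fin n → ℕ) : Antitone (lam n a) := fun _ _ hkl =>
  sum_le_sum_of_subset (monotone_filter_right _ fun _ _ => (Fin.le_def.1 hkl).trans_lt)

lemma lam_le_sum (n : ℕ) (a : Fin n → ℕ) (k : Fin (n - 1)) : lam n a k ≤ ∑ i, a i :=
  sum_le_sum_of_subset (filter_subset _ _)

lemma lam_eq_sum_Ici (a : Fin (m + 1) → ℕ) (k : Fin m) :
    lam (m + 1) a k = ∑ j ∈ Ici k.succ, a j := by
  refine sum_congr ?_ fun _ _ => rfl
  ext j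
  simp only [mem_filter_univ, mem_Ici, Fin.le_def, Fin.val_succ, Nat.succ_le_iff]

lemma cons_sum_lam (a : Fin (m + 1) → ℕ) :
    (Fin.cons (∑ i, a i) (lam (m + 1) a) : Fin (m + 1) → ℕ) = fun i => ∑ j ∈ Ici i, a j := by
  funext i
  cases i using Fin.cases with
  | zero => rw [Fin.cons_zero, ← bot_eq_zero, Ici_bot]
  | succ k => rw [Fin.cons_succ, lam_eq_sum_Ici]

lemma diagSums_eq_lam (n : ℕ) (M : Fin n → Fin n → ℕ) :
    diagSums n M = lam n fun i => M i i :=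
  rfl

lemma diagSums_antitone (n : ℕ) (M : Fin n → Fin n → ℕ) : Antitone (diagSums n M) :=
  diagSums_eq_lam n M ▸ lam_antitone n _

section Bidiagonal

/-- The upper bidiagonal matrix with diagonal `d` and superdiagonal `s`. -/
def bidiagonal {α : Type*} [Zero α] (d : Fin (m + 1) → α) (s : Fin m → α) (i j : Fin (m + 1)) : α :=
  if i = j then d i
  else Fin.cases 0 (fun k => if i = k.castSucc then s k else 0) j

section Entries

variable {α : Type*} [Zero α] (d : Fin (m + 1) → α) (s : Fin m → α)

lemma bidiagonal_self (i : Fin (m + 1)) : bidiagonal d s i i = d i :=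
  if_pos rfl

lemma bidiagonal_castSucc_succ (k : Fin m) : bidiagonal d s k.castSucc k.succ = s k := by
  simp [bidiagonal, Fin.castSucc_lt_succ.ne]

lemma bidiagonal_of_ne {i j : Fin (m + 1)} (hij : i ≠ j) (hij' : (j : ℕ) ≠ i + 1) :
    bidiagonal d s i j = 0 := by
  cases j using Fin.cases with
  | zero => simp [bidiagonal, hij]
  | succ k =>
    have hik : i ≠ k.castSucc := fun h => hij' (by simp [h])
    simp [bidiagonal, hij, hik]

end Entries

lemma twoDiag_bidiagonal (d : Fin (m + 1) → ℕ) (s : Fin m → ℕ) :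
    TwoDiag (m + 1) (bidiagonal d s) := fun i j hij =>
  bidiagonal_of_ne d s (by rintro rfl; omega) hij.ne'

variable {M : Fin (m + 1) → Fin (m + 1) → ℕ}

lemma TwoDiag.eq_bidiagonal (hM : TwoDiag (m + 1) M) (upper : ∀ i j, j < i → M i j = 0) :
    M = bidiagonal (fun i => M i i) fun k => M k.castSucc k.succ := by
  funext i j
  by_cases hdiag : i = j
  · rw [hdiag, bidiagonal_self]
  by_cases hsuper : (j : ℕ) = i + 1
  · obtain ⟨k, rfl⟩ := Fin.exists_succ_eq.2 (show j ≠ 0 by rintro rfl; simp at hsuper)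
    obtain rfl : i = k.castSucc := Fin.ext (by simpa using hsuper.symm)
    rw [bidiagonal_castSucc_succ]
  · rw [bidiagonal_of_ne _ _ hdiag hsuper]
    obtain hji | hij : j < i ∨ (i : ℕ) + 1 < j := by omega
    exacts [upper i j hji, hM i j hij]

lemma TwoDiag.sum_Ioi_castSucc (hM : TwoDiag (m + 1) M) (k : Fin m) :
    ∑ j ∈ Ioi k.castSucc, M k.castSucc j = M k.castSucc k.succ := by
  refine sum_eq_single_of_mem _ (mem_Ioi.2 Fin.castSucc_lt_succ) fun j hj hne => hM _ _ ?_
  exact (Fin.castSucc_lt_iff_succ_le.1 (mem_Ioi.1 hj)).lt_of_ne hne.symm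

lemma TwoDiag.sum_Iio_succ (hM : TwoDiag (m + 1) M) (k : Fin m) :
    ∑ j ∈ Iio k.succ, M j k.succ = M k.castSucc k.succ := by
  refine sum_eq_single_of_mem _ (mem_Iio.2 Fin.castSucc_lt_succ) fun j hj hne => hM _ _ ?_
  exact Nat.succ_lt_succ ((Fin.le_castSucc_iff.2 (mem_Iio.1 hj)).lt_of_ne hne)

end Bidiagonal

section TwoDiagonalTesler

variable {a : Fin (m + 1) → ℕ} {M : Fin (m + 1) → Fin (m + 1) → ℕ} {μ : Fin m → ℕ}

lemma TwoDiag.isTesler_iff (hM : TwoDiag (m + 1) M) :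
    IsTesler (m + 1) a M ↔ (∀ i j, j < i → M i j = 0) ∧ ∑ i, M i i = ∑ i, a i ∧
      ∀ k : Fin m, diagSums (m + 1) M k + M k.castSucc k.succ = lam (m + 1) a k := by
  have row_last : ∑ j ∈ Ioi (Fin.last m), M (Fin.last m) j = 0 := by
    rw [← Fin.top_eq_last, Ioi_top, sum_empty]
  have row_eq_column (k : Fin m) :
      ∑ j ∈ Ioi k.castSucc, M k.castSucc j = ∑ j ∈ Iio k.succ, M j k.succ := by
    rw [hM.sum_Ioi_castSucc, hM.sum_Iio_succ]
  have column_zero : ∑ j ∈ Iio (0 : Fin (m + 1)), M j 0 = 0 := by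
    rw [← bot_eq_zero, Iio_bot, sum_empty]
  simp only [IsTesler, filter_gt_eq_Iio, filter_lt_eq_Ioi]
  refine and_congr_right' ?_
  rw [forall_add_eq_add_iff_forall_sum_Ici_add row_last row_eq_column, Fin.forall_fin_succ,
    column_zero, add_zero, ← bot_eq_zero, Ici_bot]
  simp only [hM.sum_Iio_succ, diagSums_eq_lam, lam_eq_sum_Ici]

/-- The inverse of `diagSums` on two-diagonal Tesler matrices of size `m + 1`: the superdiagonal is
`λ(a) - μ`, and the diagonal has tail sums `(∑ a, μ_1, …, μ_m)`. -/
def teslerOfPartition (a : Fin (m + 1) → ℕ) (μ : Fin m → ℕ) : Fin (m + 1) → Fin (m + 1) → ℕ :=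
  bidiagonal (tailDiff (Fin.cons (∑ i, a i) μ)) fun k => lam (m + 1) a k - μ k

lemma teslerOfPartition_diagSums (hT : IsTesler (m + 1) a M) (hM : TwoDiag (m + 1) M) :
    teslerOfPartition a (diagSums (m + 1) M) = M := by
  obtain ⟨upper, trace, superdiag⟩ := hM.isTesler_iff.1 hT
  have diag_eq : tailDiff (Fin.cons (∑ i, a i) (diagSums (m + 1) M) : Fin (m + 1) → ℕ) =
      fun i => M i i := by
    rw [← trace, diagSums_eq_lam, cons_sum_lam, tailDiff_sum_Ici]
  have superdiag_eq (k : Fin m) :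
      lam (m + 1) a k - diagSums (m + 1) M k = M k.castSucc k.succ := by
    rw [← superdiag, Nat.add_sub_cancel_left]
  simp only [teslerOfPartition, diag_eq, superdiag_eq]
  exact (hM.eq_bidiagonal upper).symm

lemma cons_sum_diagSums_teslerOfPartition (hμ : Antitone μ) (hle : ∀ k, μ k ≤ lam (m + 1) a k) :
    (Fin.cons (∑ i, teslerOfPartition a μ i i) (diagSums (m + 1) (teslerOfPartition a μ)) :
      Fin (m + 1) → ℕ) = Fin.cons (∑ i, a i) μ := by
  have tails_antitone : Antitone (Fin.cons (∑ i, a i) μ : Fin (m + 1) → ℕ) :=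
    antitone_cons hμ fun k => (hle k).trans (lam_le_sum _ a k)
  rw [diagSums_eq_lam, cons_sum_lam]
  funext i
  simp only [teslerOfPartition, bidiagonal_self, sum_Ici_tailDiff tails_antitone]

lemma diagSums_teslerOfPartition (hμ : Antitone μ) (hle : ∀ k, μ k ≤ lam (m + 1) a k) :
    diagSums (m + 1) (teslerOfPartition a μ) = μ :=
  (Fin.cons_inj.1 (cons_sum_diagSums_teslerOfPartition hμ hle)).2

lemma twoDiag_teslerOfPartition (a : Fin (m + 1) → ℕ) (μ : Fin m → ℕ) :
    TwoDiag (m + 1) (teslerOfPartition a μ) :=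
  twoDiag_bidiagonal _ _

lemma isTesler_teslerOfPartition (hμ : Antitone μ) (hle : ∀ k, μ k ≤ lam (m + 1) a k) :
    IsTesler (m + 1) a (teslerOfPartition a μ) := by
  refine (twoDiag_teslerOfPartition a μ).isTesler_iff.2 ⟨fun i j hji => ?_, ?_, fun k => ?_⟩
  · exact bidiagonal_of_ne _ _ hji.ne' (by omega)
  · exact (Fin.cons_inj.1 (cons_sum_diagSums_teslerOfPartition hμ hle)).1
  · rw [diagSums_teslerOfPartition hμ hle, teslerOfPartition, bidiagonal_castSucc_succ,
      Nat.add_sub_cancel' (hle k)]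

lemma diagSums_le_lam (hT : IsTesler (m + 1) a M) (hM : TwoDiag (m + 1) M) (k : Fin m) :
    diagSums (m + 1) M k ≤ lam (m + 1) a k := by
  obtain ⟨-, -, superdiag⟩ := hM.isTesler_iff.1 hT
  exact (superdiag k).le.trans' (Nat.le_add_right _ _)

end TwoDiagonalTesler

theorem twoDiagonal_tesler_bijection (n : ℕ) (hn : 2 ≤ n) (a : Fin n → ℕ) :
    Set.BijOn (fun M => diagSums n M)
      {M : Fin n → Fin n → ℕ | IsTesler n a M ∧ TwoDiag n M}
      {μ : Fin (n - 1) → ℕ |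
        (∀ k l : Fin (n - 1), k ≤ l → μ l ≤ μ k) ∧ ∀ k, μ k ≤ lam n a k} := by
  obtain ⟨m, rfl⟩ : ∃ m, n = m + 1 := ⟨n - 1, by omega⟩
  refine Set.InvOn.bijOn (f' := teslerOfPartition a) ⟨?leftInv, ?rightInv⟩ ?mapsTo ?mapsToInv
  case leftInv => exact fun M ⟨hT, hM⟩ => teslerOfPartition_diagSums hT hM
  case rightInv => exact fun μ ⟨hμ, hle⟩ => diagSums_teslerOfPartition hμ hle
  case mapsTo => exact fun M ⟨hT, hM⟩ => ⟨diagSums_antitone _ M, diagSums_le_lam hT hM⟩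
  case mapsToInv =>
    exact fun μ ⟨hμ, hle⟩ => ⟨isTesler_teslerOfPartition hμ hle, twoDiag_teslerOfPartition a μ⟩
end

section
/- Let h ∈ ℤ[q,t] be a polynomial with nonnegative coefficients such that every monomial q^i t^j occurring in h satisfies i ≥ j. Then the rational function h(q,t)/(1 − t/q) + h(t,q)/(1 − q/t) = (q·h(q,t) − t·h(t,q))/(q − t) is a polynomial in q and t with nonnegative integer coefficients. -/
open MvPolynomial

noncomputable section

/-- The fraction field `ℚ(q,t)` realized as the fraction field of `ℤ[q,t]`. -/
abbrev K : Type := FractionRing (MvPolynomial (Fin 2) ℤ)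

/-- The canonical embedding `ℤ[q,t] → ℚ(q,t)`. -/
def φ : MvPolynomial (Fin 2) ℤ →+* K := algebraMap _ _

/-!
The map `h ↦ (x h - y s(h)) / (x - y)`, where `s` swaps `x` and `y`, is additive, so it suffices to
treat a monomial. A monomial in which `x` has exponent at least that of `y` is `u * x ^ d` with `u`
fixed by `s`, and its image is `u * (x ^ (d + 1) - y ^ (d + 1)) / (x - y)`, a sum of monomials.
-/

section NonnegCoeffs

/-- The semiring of polynomials all of whose coefficients are nonnegative. -/
def nonnegCoeffs (σ R : Type*) [CommSemiring R] [PartialOrder R] [IsOrderedRing R] :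
    Subsemiring (MvPolynomial σ R) where
  carrier := {p | ∀ m, 0 ≤ p.coeff m}
  zero_mem' m := (coeff_zero m).ge
  add_mem' hp hq m := by simpa only [coeff_add] using add_nonneg (hp m) (hq m)
  one_mem' m := by
    classical
    rw [coeff_one]
    split_ifs
    exacts [zero_le_one, le_rfl]
  mul_mem' hp hq m := by
    classical
    simpa only [coeff_mul] using Finset.sum_nonneg fun k _ => mul_nonneg (hp k.1) (hq k.2)

variable {σ R : Type*} [CommSemiring R] [PartialOrder R] [IsOrderedRing R]

theorem monomial_mem_nonnegCoeffs (m : σ →₀ ℕ) {c : R} (hc : 0 ≤ c) :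
    monomial m c ∈ nonnegCoeffs σ R := fun k => by
  classical
  rw [coeff_monomial]
  split_ifs
  exacts [hc, le_rfl]

theorem X_mem_nonnegCoeffs (i : σ) : (X i : MvPolynomial σ R) ∈ nonnegCoeffs σ R :=
  monomial_mem_nonnegCoeffs _ zero_le_one

end NonnegCoeffs

section Exponents

variable {σ : Type*} {i j : σ}

theorem mapDomain_swap_eq_self {M : Type*} [DecidableEq σ] [AddCommMonoid M] {n : σ →₀ M}
    (hn : n i = n j) :
    n.mapDomain (Equiv.swap i j) = n := by
  ext k
  rw [← Finsupp.equivMapDomain_eq_mapDomain, Finsupp.equivMapDomain_apply, Equiv.symm_swap,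
    Equiv.apply_swap_eq_self hn]

theorem exists_eq_add_single_of_le {m : σ →₀ ℕ} (hm : m j ≤ m i) :
    ∃ (n : σ →₀ ℕ) (d : ℕ), n i = n j ∧ m = n + Finsupp.single i d := by
  have hle : Finsupp.single i (m i - m j) ≤ m := Finsupp.single_le_iff.mpr (Nat.sub_le _ _)
  refine ⟨m - Finsupp.single i (m i - m j), m i - m j, ?_, (tsub_add_cancel_of_le hle).symm⟩
  rcases eq_or_ne i j with rfl | hij
  · rfl
  · rw [Finsupp.tsub_apply, Finsupp.tsub_apply, Finsupp.single_eq_same,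
      Finsupp.single_eq_of_ne hij.symm, Nat.sub_sub_self hm, Nat.sub_zero]

end Exponents

section DemazureNumerator

variable {σ R : Type*} [DecidableEq σ] [CommRing R]

/-- The numerator `X i * h - X j * s(h)` of the Demazure operator (isobaric divided difference)
`h ↦ (X i * h - X j * s(h)) / (X i - X j)`, where `s` exchanges the variables `X i` and `X j`. -/
def demazureNumerator (i j : σ) : MvPolynomial σ R →ₗ[R] MvPolynomial σ R :=
  LinearMap.mulLeft R (X i) -
    LinearMap.mulLeft R (X j) ∘ₗ (rename (Equiv.swap i j)).toLinearMap

theorem demazureNumerator_apply (i j : σ) (h : MvPolynomial σ R) :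
    demazureNumerator i j h = X i * h - X j * rename (Equiv.swap i j) h := rfl

theorem demazureNumerator_monomial_add_single {i j : σ} {n : σ →₀ ℕ} (hn : n i = n j) (d : ℕ)
    (c : R) :
    demazureNumerator i j (monomial (n + Finsupp.single i d) c) =
      monomial n c * (∑ k ∈ Finset.range (d + 1), X i ^ k * X j ^ (d - k)) * (X i - X j) := by
  have geom_sum : (∑ k ∈ Finset.range (d + 1), X i ^ k * X j ^ (d - k)) * (X i - X j) =
      (X i ^ (d + 1) - X j ^ (d + 1) : MvPolynomial σ R) :=
    (Commute.all _ _).geom_sum₂_mul (d + 1)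
  have swap_fixes_monomial : rename (Equiv.swap i j) (monomial n c) = monomial n c := by
    rw [rename_monomial, mapDomain_swap_eq_self hn]
  rw [demazureNumerator_apply, monomial_add_single, map_mul, map_pow, rename_X,
    Equiv.swap_apply_left, swap_fixes_monomial, mul_assoc, geom_sum]
  ring

variable [PartialOrder R] [IsOrderedRing R]

theorem exists_mem_nonnegCoeffs_mul_eq_demazureNumerator_monomial {i j : σ} {m : σ →₀ ℕ}
    (hm : m j ≤ m i) {c : R} (hc : 0 ≤ c) :
    ∃ g ∈ nonnegCoeffs σ R, g * (X i - X j) = demazureNumerator i j (monomial m c) := by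
  obtain ⟨n, d, hn, rfl⟩ := exists_eq_add_single_of_le hm
  refine ⟨_, mul_mem (monomial_mem_nonnegCoeffs n hc) (sum_mem fun k _ => ?_),
    (demazureNumerator_monomial_add_single hn d c).symm⟩
  exact mul_mem (pow_mem (X_mem_nonnegCoeffs i) k) (pow_mem (X_mem_nonnegCoeffs j) (d - k))

theorem exists_mem_nonnegCoeffs_mul_eq_demazureNumerator {i j : σ} {h : MvPolynomial σ R}
    (hpos : h ∈ nonnegCoeffs σ R) (hdom : ∀ m ∈ h.support, m j ≤ m i) :
    ∃ g ∈ nonnegCoeffs σ R, g * (X i - X j) = demazureNumerator i j h := by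
  suffices demazureNumerator i j h ∈
      (nonnegCoeffs σ R).toAddSubmonoid.map (AddMonoidHom.mulRight (X i - X j)) from this
  rw [h.as_sum, map_sum]
  exact sum_mem fun m hm =>
    exists_mem_nonnegCoeffs_mul_eq_demazureNumerator_monomial (hdom m hm) (hpos m)

end DemazureNumerator

theorem div_one_sub_div_add_div_one_sub_div {F : Type*} [Field F] {x y : F} (hx : x ≠ 0)
    (hy : y ≠ 0) (hxy : x ≠ y) (a b : F) :
    a / (1 - y / x) + b / (1 - x / y) = (x * a - y * b) / (x - y) := by
  have : x - y ≠ 0 := sub_ne_zero.mpr hxy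
  have : y - x ≠ 0 := sub_ne_zero.mpr hxy.symm
  rw [one_sub_div hx, one_sub_div hy]
  field_simp
  ring

theorem nonneg_dominant_poly_symmetrization_general {σ R F : Type*} [DecidableEq σ] [CommRing R]
    [PartialOrder R] [IsOrderedRing R] [Field F] {f : MvPolynomial σ R →+* F}
    (hf : Function.Injective f) {i j : σ} (hij : i ≠ j) (h : MvPolynomial σ R)
    (hpos : ∀ m : σ →₀ ℕ, 0 ≤ h.coeff m) (hdom : ∀ m ∈ h.support, m j ≤ m i) :
    (f h / (1 - f (X j) / f (X i)) + f (rename (Equiv.swap i j) h) / (1 - f (X i) / f (X j))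
      = (f (X i) * f h - f (X j) * f (rename (Equiv.swap i j) h)) / (f (X i) - f (X j))) ∧
    ∃ g : MvPolynomial σ R, (∀ m : σ →₀ ℕ, 0 ≤ g.coeff m) ∧
      f g = (f (X i) * f h - f (X j) * f (rename (Equiv.swap i j) h)) / (f (X i) - f (X j)) := by
  have : Nontrivial R := (f.comp C).domain_nontrivial
  have hX (k : σ) : f (X k) ≠ 0 := (map_ne_zero_iff f hf).mpr (X_ne_zero k)
  have hne : f (X i) ≠ f (X j) := hf.ne (X_injective.ne hij)
  refine ⟨div_one_sub_div_add_div_one_sub_div (hX i) (hX j) hne _ _, ?_⟩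
  obtain ⟨g, hg, hgh⟩ := exists_mem_nonnegCoeffs_mul_eq_demazureNumerator hpos hdom
  refine ⟨g, hg, ?_⟩
  rw [eq_div_iff (sub_ne_zero.mpr hne)]
  simpa only [demazureNumerator_apply, map_sub, map_mul] using congrArg f hgh

theorem nonneg_dominant_poly_symmetrization (h : MvPolynomial (Fin 2) ℤ)
    (hpos : ∀ m : Fin 2 →₀ ℕ, 0 ≤ h.coeff m)
    (hdom : ∀ m ∈ h.support, m 1 ≤ m 0) :
    (φ h / (1 - φ (X 1) / φ (X 0))
        + φ (rename (Equiv.swap (0 : Fin 2) 1) h) / (1 - φ (X 0) / φ (X 1))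
      = (φ (X 0) * φ h - φ (X 1) * φ (rename (Equiv.swap (0 : Fin 2) 1) h))
          / (φ (X 0) - φ (X 1))) ∧
    ∃ g : MvPolynomial (Fin 2) ℤ, (∀ m : Fin 2 →₀ ℕ, 0 ≤ g.coeff m) ∧
      φ g = (φ (X 0) * φ h - φ (X 1) * φ (rename (Equiv.swap (0 : Fin 2) 1) h))
              / (φ (X 0) - φ (X 1)) :=
  nonneg_dominant_poly_symmetrization_general (IsFractionRing.injective _ K) zero_ne_one h hpos hdom
end
end

section
/- Let a, b, c be nonnegative integers with a+1 ≥ b, a+1 ≥ c and b+1 ≥ c. Then the specialization of F₃(a,b,c) at t = q^{−1} is a Laurent polynomial ∑_k c_k q^k in q with nonnegative integer coefficients which is symmetric about degree 0 (c_k = c_{−k} for all k) and whose coefficients are unimodal in even and in odd degrees: c_k ≥ c_{k+2} for all k ≥ 0. -/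
open Finset

noncomputable section

/-- `H₃(a,b,c;x,y)`, the head-like standard-tableau expansion for `n = 4`, as a field
expression in the two variables `x`, `y` (interchanging them interchanges `q` and `t`). -/
def H₃ {F : Type*} [Field F] (a b c : ℤ) (x y : F) : F :=
  x ^ (a + 2 * b + 3 * c) / ((1 - y / x ^ 2) * (1 - y / x ^ 3))
    + x ^ (a + 2 * b) * y ^ c / ((1 - y / x ^ 2) * (1 - x ^ 3 / y))
    + x ^ (a + 2 * c) * y ^ b * (1 - y) / ((1 - y ^ 2 / x ^ 2) * (1 - x ^ 2 / y) * (1 - y / x))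
    + x ^ a * y ^ (b + 2 * c) / ((1 - x ^ 2 / y ^ 2) * (1 - x / y))
    + x ^ (a + c) * y ^ (b + c) * (1 - x) / ((1 - x ^ 2 / y) * (1 - x / y) * (1 - y / x))

/-- `F₃(a,b,c) = H₃(a,b,c;x,y)/(1 − y/x) + H₃(a,b,c;y,x)/(1 − x/y)`. -/
def F₃ {F : Type*} [Field F] (a b c : ℤ) (x y : F) : F :=
  H₃ a b c x y / (1 - y / x) + H₃ a b c y x / (1 - x / y)

/-- The field `ℚ(u)` of rational functions in one variable over `ℚ`. -/
abbrev K1 : Type := FractionRing (Polynomial ℚ)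

/-- The variable `u` of `ℚ(u)`; the specialization `t = q⁻¹` of `ℚ(q,t)` sends
`q ↦ u` and `t ↦ u⁻¹`. -/
def u : K1 := algebraMap (Polynomial ℚ) K1 Polynomial.X

/-!
At `t = q⁻¹` the rational function `H₃` collapses to a sum of powers of `q`, whose exponents can be
listed explicitly. Since `1 - t / q = 1 - q⁻²`, passing from `H₃` to `F₃` replaces each power
`q ^ n` by the `SL₂` character `χ n` of highest weight `n`, by Weyl's character formula. Exponents
below `-1` contribute negatively because `χ (-2 - n) = -χ n`; Clebsch–Gordan products show that
these terms cancel. So `F₃` is a nonnegative combination of genuine characters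
`q ^ n + q ^ (n - 2) + ⋯ + q ^ (-n)`, each of which is symmetric and unimodal in each parity.
-/

section SchurPositivity

variable {K : Type*} [Field K] {v : K}

theorem sq_ne_one_of_pow_four_ne_one (hv4 : v ^ 4 ≠ 1) : v ^ 2 ≠ 1 :=
  fun h => hv4 (by linear_combination (v ^ 2 + 1) * h)

theorem sum_zpow_sub_mul {s : ℕ} (hv : v ≠ 0) (hs : v ^ s ≠ 1) (n : ℤ) (c : ℕ) :
    ∑ j ∈ range (c + 1), v ^ (n - s * j) =
      v ^ n / (1 - v⁻¹ ^ s) + v ^ (n - s * c) / (1 - v ^ s) := by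
  have h_pow : v ^ s ≠ 0 := pow_ne_zero s hv
  have h_sub : v ^ s - 1 ≠ 0 := sub_ne_zero.2 hs
  rw [inv_pow]
  induction c with
  | zero =>
    rw [zero_add, sum_range_one, Nat.cast_zero, mul_zero, sub_zero]
    field_simp
    ring
  | succ c ih =>
    have h_step : v ^ (n - s * c) = v ^ (n - s * (c + 1 : ℕ)) * v ^ s := by
      rw [← zpow_natCast v s, ← zpow_add₀ hv]
      push_cast
      ring_nf
    rw [sum_range_succ, ih, h_step]
    field_simp
    ring

/-- The character of the irreducible representation of `SL₂` of highest weight `n`, at the diagonal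
matrix with entries `v, v⁻¹`. Weyl's formula extends it to all integers `n`, with
`sl2Character v (-1) = 0`; when `v ^ 2 = 1` it takes the junk value `0`. -/
def sl2Character (v : K) (n : ℤ) : K :=
  v ^ n / (1 - v⁻¹ ^ 2) + v⁻¹ ^ n / (1 - v ^ 2)

theorem sl2Character_inv (v : K) (n : ℤ) : sl2Character v⁻¹ n = sl2Character v n := by
  rw [sl2Character, sl2Character, inv_inv, add_comm]

theorem sl2Character_natCast (hv : v ≠ 0) (hv2 : v ^ 2 ≠ 1) (n : ℕ) :
    sl2Character v n = ∑ i ∈ range (n + 1), v ^ ((n : ℤ) - 2 * i) := by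
  have h_sum := sum_zpow_sub_mul hv hv2 n n
  rw [Nat.cast_two] at h_sum
  rw [h_sum, sl2Character, inv_zpow', two_mul, sub_add_cancel_left]

theorem sl2Character_zero (hv : v ≠ 0) (hv2 : v ^ 2 ≠ 1) : sl2Character v 0 = 1 := by
  simpa using sl2Character_natCast hv hv2 0

theorem sl2Character_neg_two_sub (hv : v ≠ 0) (n : ℤ) :
    sl2Character v (-2 - n) = -sl2Character v n := by
  rcases eq_or_ne (v ^ 2) 1 with h | h
  · simp [sl2Character, h]
  have h_sub : v ^ 2 - 1 ≠ 0 := sub_ne_zero.2 h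
  simp only [sl2Character, inv_zpow', inv_pow, neg_sub, sub_neg_eq_add, zpow_sub₀ hv, zpow_add₀ hv,
    zpow_neg, zpow_ofNat]
  field_simp
  ring

theorem sl2Character_neg_one (hv : v ≠ 0) : sl2Character v (-1) = 0 := by
  rcases eq_or_ne (v ^ 2) 1 with h | h
  · simp [sl2Character, h]
  have h_sub : v ^ 2 - 1 ≠ 0 := sub_ne_zero.2 h
  simp only [sl2Character, inv_pow, zpow_neg_one, inv_inv]
  field_simp
  ring

theorem sum_sl2Character_add_mul {s : ℕ} (hv : v ≠ 0) (hs : (v ^ s) ^ 2 ≠ 1) (p : ℤ) (d : ℕ) :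
    ∑ j ∈ range (d + 1), sl2Character v (p + s * (d - 2 * j)) =
      sl2Character v p * sl2Character (v ^ s) d := by
  have h_exp (w : K) (hw : w ≠ 0) (hws : (w ^ s) ^ 2 ≠ 1) :
      ∑ j ∈ range (d + 1), w ^ (p + s * ((d : ℤ) - 2 * j)) =
        w ^ p * sl2Character (w ^ s) d := by
    simp only [zpow_add₀ hw, zpow_mul, zpow_natCast]
    rw [← mul_sum, sl2Character_natCast (pow_ne_zero s hw) hws]
  have h_inv : sl2Character (v⁻¹ ^ s) d = sl2Character (v ^ s) d := by
    rw [inv_pow, sl2Character_inv]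
  have hs' : (v⁻¹ ^ s) ^ 2 ≠ 1 := by
    rwa [inv_pow, inv_pow, Ne, inv_eq_one]
  simp only [sl2Character.eq_def v]
  rw [sum_add_distrib, ← sum_div, ← sum_div, h_exp v hv hs, h_exp v⁻¹ (inv_ne_zero hv) hs', h_inv]
  ring

theorem sl2Character_sq_add_succ (hv : v ≠ 0) (hv4 : v ^ 4 ≠ 1) (n : ℤ) :
    sl2Character (v ^ 2) n + sl2Character (v ^ 2) (n + 1) = sl2Character v (2 * (n + 1)) := by
  have hv2 : v ^ 2 ≠ 1 := sq_ne_one_of_pow_four_ne_one hv4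
  have h2 : v ^ 2 - 1 ≠ 0 := sub_ne_zero.2 hv2
  have h4 : v ^ 4 - 1 ≠ 0 := sub_ne_zero.2 hv4
  have h_sq : (v ^ 2) ^ n = (v ^ n) ^ 2 := by
    rw [← zpow_natCast, zpow_comm, zpow_natCast]
  simp only [sl2Character, inv_zpow, inv_pow, ← pow_mul, Nat.reduceMul, zpow_add₀ hv,
    zpow_add₀ (pow_ne_zero 2 hv), zpow_mul', zpow_ofNat, mul_add, h_sq]
  field_simp
  ring

theorem sl2Character_one_mul_sq (hv : v ≠ 0) (hv4 : v ^ 4 ≠ 1) (n : ℤ) :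
    sl2Character v 1 * sl2Character (v ^ 2) n = sl2Character v (2 * n + 1) := by
  have hv2 : v ^ 2 ≠ 1 := sq_ne_one_of_pow_four_ne_one hv4
  have h2 : v ^ 2 - 1 ≠ 0 := sub_ne_zero.2 hv2
  have h4 : v ^ 4 - 1 ≠ 0 := sub_ne_zero.2 hv4
  have h_sq : (v ^ 2) ^ n = (v ^ n) ^ 2 := by
    rw [← zpow_natCast, zpow_comm, zpow_natCast]
  simp only [sl2Character, inv_zpow, inv_pow, ← pow_mul, Nat.reduceMul, zpow_add₀ hv,
    zpow_mul', zpow_ofNat, h_sq]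
  field_simp
  ring

theorem H₃_succ_succ (hv : v ≠ 0) (hv3 : v ^ 3 ≠ 1) (hv4 : v ^ 4 ≠ 1) (e b : ℤ) (c : ℕ) :
    H₃ (e + (b + 1)) (b + 1) c v v⁻¹ =
      H₃ (e + b) b c v v⁻¹ + ∑ j ∈ range (c + 1), v ^ (e + 3 * b + 3 * c + 3 - 4 * j) := by
  have hv2 : v ^ 2 ≠ 1 := sq_ne_one_of_pow_four_ne_one hv4
  have h2 : v ^ 2 - 1 ≠ 0 := sub_ne_zero.2 hv2
  have h3 : v ^ 3 - 1 ≠ 0 := sub_ne_zero.2 hv3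
  have h4 : v ^ 4 - 1 ≠ 0 := sub_ne_zero.2 hv4
  have h_geom (n : ℤ) := sum_zpow_sub_mul hv hv4 n c
  simp only [Nat.cast_ofNat] at h_geom
  rw [h_geom]
  simp only [H₃, inv_pow, inv_zpow, div_inv_eq_mul, zpow_add₀ hv, zpow_sub₀ hv, zpow_mul',
    zpow_ofNat, zpow_natCast, mul_add]
  field_simp
  ring

theorem H₃_diagonal_succ (hv : v ≠ 0) (hv3 : v ^ 3 ≠ 1) (hv4 : v ^ 4 ≠ 1) (e : ℤ) (c : ℕ) :
    H₃ (e + c) c (c + 1) v v⁻¹ =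
      H₃ (e + (c - 1)) (c - 1) c v v⁻¹ +
        ∑ j ∈ range (c + 1), (v ^ (e + 6 * c + 3 - 4 * j) + v ^ (e + 6 * c - 4 * j)
          + v ^ (e + 2 * c - 2 - 4 * j)) := by
  have hv2 : v ^ 2 ≠ 1 := sq_ne_one_of_pow_four_ne_one hv4
  have h2 : v ^ 2 - 1 ≠ 0 := sub_ne_zero.2 hv2
  have h3 : v ^ 3 - 1 ≠ 0 := sub_ne_zero.2 hv3
  have h4 : v ^ 4 - 1 ≠ 0 := sub_ne_zero.2 hv4
  have h_geom (n : ℤ) := sum_zpow_sub_mul hv hv4 n c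
  simp only [Nat.cast_ofNat] at h_geom
  rw [sum_add_distrib, sum_add_distrib, h_geom, h_geom, h_geom]
  simp only [H₃, inv_pow, inv_zpow, div_inv_eq_mul, zpow_add₀ hv, zpow_sub₀ hv, zpow_mul',
    zpow_ofNat, zpow_natCast, mul_add]
  field_simp
  ring

theorem H₃_neg_one_zero (hv : v ≠ 0) (hv3 : v ^ 3 ≠ 1) (hv4 : v ^ 4 ≠ 1) (a : ℤ) :
    H₃ a (-1) 0 v v⁻¹ = 0 := by
  have hv2 : v ^ 2 ≠ 1 := sq_ne_one_of_pow_four_ne_one hv4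
  have h2 : v ^ 2 - 1 ≠ 0 := sub_ne_zero.2 hv2
  have h3 : v ^ 3 - 1 ≠ 0 := sub_ne_zero.2 hv3
  have h4 : v ^ 4 - 1 ≠ 0 := sub_ne_zero.2 hv4
  simp only [H₃, inv_pow, inv_zpow, div_inv_eq_mul, zpow_add₀ hv, zpow_mul',
    zpow_ofNat, mul_neg, mul_zero, zpow_neg]
  field_simp
  ring

/-- The sum of `f` over the exponents (with multiplicity) of the Laurent polynomial
`H₃ a b c q q⁻¹`, where `a = e + b` and `b = c + m - 1`. -/
def weightSum {M : Type*} [AddCommMonoid M] (f : ℤ → M) (e : ℤ) (c m : ℕ) : M :=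
  ∑ d ∈ range c, ∑ j ∈ range (d + 1),
      (f (e + 6 * d + 3 - 4 * j) + f (e + 6 * d - 4 * j) + f (e + 2 * d - 2 - 4 * j))
    + ∑ i ∈ range m, ∑ j ∈ range (c + 1), f (e + 6 * c + 3 * i - 4 * j)

theorem H₃_eq_weightSum (hv : v ≠ 0) (hv3 : v ^ 3 ≠ 1) (hv4 : v ^ 4 ≠ 1) (e : ℤ) (c m : ℕ) :
    H₃ (e + (c + m - 1)) (c + m - 1) c v v⁻¹ = weightSum (v ^ ·) e c m := by
  induction m with
  | zero =>
    rw [weightSum, sum_range_zero, add_zero, Nat.cast_zero, add_zero]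
    induction c with
    | zero => exact H₃_neg_one_zero hv hv3 hv4 _
    | succ c ih =>
      rw [sum_range_succ, ← ih, ← H₃_diagonal_succ hv hv3 hv4]
      push_cast
      rw [add_sub_cancel_right]
  | succ m ih =>
    have h_succ : (c : ℤ) + (m + 1 : ℕ) - 1 = c + m - 1 + 1 := by
      push_cast
      ring
    have h_exp (j : ℕ) : e + 3 * ((c : ℤ) + m - 1) + 3 * c + 3 - 4 * j =
        e + 6 * c + 3 * m - 4 * j := by ring
    rw [h_succ, H₃_succ_succ hv hv3 hv4, ih, weightSum, weightSum, sum_range_succ _ m, add_assoc]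
    simp only [h_exp]

theorem F₃_eq_weightSum_sl2Character (hv : v ≠ 0) (hv3 : v ^ 3 ≠ 1) (hv4 : v ^ 4 ≠ 1)
    (e : ℤ) (c m : ℕ) :
    F₃ (e + (c + m - 1)) (c + m - 1) c v v⁻¹ = weightSum (sl2Character v) e c m := by
  have h_inv (n : ℕ) (h : v ^ n ≠ 1) : v⁻¹ ^ n ≠ 1 := by rwa [inv_pow, Ne, inv_eq_one]
  have h_head := H₃_eq_weightSum hv hv3 hv4 e c m
  have h_head_inv := H₃_eq_weightSum (inv_ne_zero hv) (h_inv 3 hv3) (h_inv 4 hv4) e c m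
  rw [inv_inv] at h_head_inv
  have h_split : weightSum (sl2Character v) e c m =
      weightSum (v ^ ·) e c m / (1 - v⁻¹ ^ 2) + weightSum (v⁻¹ ^ ·) e c m / (1 - v ^ 2) := by
    simp only [weightSum, sl2Character, sum_add_distrib, ← sum_div, add_div]
    ring
  rw [h_split, F₃, h_head, h_head_inv, div_inv_eq_mul, div_eq_mul_inv v⁻¹ v, ← sq, ← sq]

/-- The nonnegative integer combinations of the characters `sl2Character v n` with `0 ≤ n`. -/
def schurPositive (v : K) : AddSubmonoid K :=
  AddSubmonoid.closure (Set.range fun n : ℕ => sl2Character v n)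

theorem sl2Character_mem_schurPositive (hv : v ≠ 0) {n : ℤ} (hn : -1 ≤ n) :
    sl2Character v n ∈ schurPositive v := by
  obtain rfl | hn' := hn.eq_or_lt
  · rw [sl2Character_neg_one hv]
    exact zero_mem _
  · lift n to ℕ using by omega
    exact AddSubmonoid.subset_closure ⟨n, rfl⟩

theorem sl2Character_mul_mem_schurPositive_of_le (hv : v ≠ 0) (hv2 : v ^ 2 ≠ 1) {p q : ℕ}
    (h : q ≤ p) :
    sl2Character v p * sl2Character v q ∈ schurPositive v := by
  have h_clebschGordan := sum_sl2Character_add_mul (s := 1) hv (by rwa [pow_one]) p q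
  rw [pow_one] at h_clebschGordan
  rw [← h_clebschGordan]
  refine sum_mem fun j hj => sl2Character_mem_schurPositive hv ?_
  rw [mem_range] at hj
  omega

theorem sl2Character_mul_mem_schurPositive (hv : v ≠ 0) (hv2 : v ^ 2 ≠ 1) {p : ℤ} (hp : -1 ≤ p)
    {z : K} (hz : z ∈ schurPositive v) : sl2Character v p * z ∈ schurPositive v := by
  obtain rfl | hp' := hp.eq_or_lt
  · rw [sl2Character_neg_one hv, zero_mul]
    exact zero_mem _
  lift p to ℕ using by omega
  induction hz using AddSubmonoid.closure_induction with
  | mem z hz =>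
    obtain ⟨q, rfl⟩ := hz
    obtain h | h := le_total q p
    · exact sl2Character_mul_mem_schurPositive_of_le hv hv2 h
    · rw [mul_comm]
      exact sl2Character_mul_mem_schurPositive_of_le hv hv2 h
  | zero =>
    rw [mul_zero]
    exact zero_mem _
  | add z w _ _ hz hw =>
    rw [mul_add]
    exact add_mem hz hw

theorem sum_sl2Character_sq_mem_schurPositive (hv : v ≠ 0) (hv4 : v ^ 4 ≠ 1) (c : ℕ) :
    ∑ d ∈ range c, sl2Character (v ^ 2) d ∈ schurPositive v := by
  induction c using Nat.twoStepInduction with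
  | zero => exact zero_mem _
  | one =>
    rw [sum_range_one, Nat.cast_zero,
      sl2Character_zero (pow_ne_zero 2 hv) (by rwa [← pow_mul]),
      ← sl2Character_zero hv (sq_ne_one_of_pow_four_ne_one hv4)]
    exact sl2Character_mem_schurPositive hv (by omega)
  | more c ih _ =>
    rw [sum_range_succ, sum_range_succ, add_assoc, Nat.cast_succ, sl2Character_sq_add_succ hv hv4]
    exact add_mem ih (sl2Character_mem_schurPositive hv (by omega))

theorem sum_sl2Character_add_two_mul_sub (hv : v ≠ 0) (hv4 : v ^ 4 ≠ 1) (e : ℤ) (d : ℕ) :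
    ∑ j ∈ range (d + 1), sl2Character v (e + 2 * d - 2 - 4 * j) =
      sl2Character v (e - 2) * sl2Character (v ^ 2) d := by
  rw [← sum_sl2Character_add_mul hv (by rwa [← pow_mul])]
  refine sum_congr rfl fun j _ => ?_
  push_cast
  ring_nf

theorem weightSum_sl2Character (hv : v ≠ 0) (hv4 : v ^ 4 ≠ 1) (e : ℤ) (c m : ℕ) :
    weightSum (sl2Character v) e c m =
      ∑ d ∈ range c, (∑ j ∈ range (d + 1), sl2Character v (e + 6 * d + 3 - 4 * j)
        + ∑ j ∈ range d, sl2Character v (e + 6 * d - 4 * j))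
      + ∑ d ∈ range c, (sl2Character v (e + 2 * d)
        + sl2Character v (e - 2) * sl2Character (v ^ 2) d)
      + ∑ i ∈ range m, ∑ j ∈ range (c + 1), sl2Character v (e + 6 * c + 3 * i - 4 * j) := by
  rw [weightSum, ← sum_add_distrib]
  congr 1
  refine sum_congr rfl fun d _ => ?_
  have h_exp : e + 6 * (d : ℤ) - 4 * d = e + 2 * d := by ring
  rw [sum_add_distrib, sum_add_distrib, sum_sl2Character_add_two_mul_sub hv hv4,
    sum_range_succ fun j : ℕ => sl2Character v (e + 6 * d - 4 * j), h_exp]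
  ring

theorem sum_sl2Character_sub_four_mul_mem_schurPositive (hv : v ≠ 0) {p : ℤ} {n : ℕ}
    (h : 4 * n ≤ p + 5) :
    ∑ j ∈ range n, sl2Character v (p - 4 * j) ∈ schurPositive v := by
  refine sum_mem fun j hj => sl2Character_mem_schurPositive hv ?_
  rw [mem_range] at hj
  omega

theorem sum_sl2Character_two_mul_sub_sq (hv : v ≠ 0) (hv4 : v ^ 4 ≠ 1) (c : ℕ) :
    ∑ d ∈ range (c + 1), (sl2Character v (2 * d) - sl2Character (v ^ 2) d) =
      ∑ d ∈ range c, sl2Character (v ^ 2) d := by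
  have hv2 : v ^ 2 ≠ 1 := sq_ne_one_of_pow_four_ne_one hv4
  rw [sum_range_succ']
  have h_zero : sl2Character v (2 * (0 : ℕ)) - sl2Character (v ^ 2) (0 : ℕ) = 0 := by
    rw [Nat.cast_zero, mul_zero, sl2Character_zero hv hv2,
      sl2Character_zero (pow_ne_zero 2 hv) (by rwa [← pow_mul]), sub_self]
  rw [h_zero, add_zero]
  refine sum_congr rfl fun d _ => ?_
  rw [Nat.cast_succ, ← sl2Character_sq_add_succ hv hv4, add_sub_cancel_right]

theorem sum_sl2Character_add_mul_sq_mem_schurPositive (hv : v ≠ 0) (hv4 : v ^ 4 ≠ 1) {e : ℤ}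
    (he : 0 ≤ e) (c : ℕ) :
    ∑ d ∈ range c, (sl2Character v (e + 2 * d) + sl2Character v (e - 2) * sl2Character (v ^ 2) d)
      ∈ schurPositive v := by
  have hv2 : v ^ 2 ≠ 1 := sq_ne_one_of_pow_four_ne_one hv4
  obtain rfl | he := he.eq_or_lt
  · have h_neg_two : sl2Character v (0 - 2) = -1 := by
      rw [zero_sub, ← sl2Character_zero hv hv2, ← sl2Character_neg_two_sub hv, sub_zero]
    simp only [h_neg_two, zero_add, neg_one_mul, ← sub_eq_add_neg]
    cases c with
    | zero => exact zero_mem _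
    | succ c =>
      rw [sum_sl2Character_two_mul_sub_sq hv hv4]
      exact sum_sl2Character_sq_mem_schurPositive hv hv4 c
  · rw [sum_add_distrib, ← mul_sum]
    exact add_mem (sum_mem fun d _ => sl2Character_mem_schurPositive hv (by omega))
      (sl2Character_mul_mem_schurPositive hv hv2 (by omega)
        (sum_sl2Character_sq_mem_schurPositive hv hv4 c))

theorem sum_sl2Character_neg_one_add_mul_sq (hv : v ≠ 0) (hv4 : v ^ 4 ≠ 1) (c : ℕ) :
    ∑ d ∈ range c, (sl2Character v (-1 + 2 * d)
      + sl2Character v (-1 - 2) * sl2Character (v ^ 2) d) = -sl2Character v (-1 + 2 * c) := by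
  have h_neg_three : sl2Character v (-1 - 2) = -sl2Character v 1 :=
    sl2Character_neg_two_sub hv 1
  induction c with
  | zero => simp [sl2Character_neg_one hv]
  | succ c ih =>
    have h_exp : -1 + 2 * ((c + 1 : ℕ) : ℤ) = 2 * c + 1 := by
      push_cast
      ring
    rw [sum_range_succ, ih, h_neg_three, neg_mul, sl2Character_one_mul_sq hv hv4, h_exp,
      neg_add_cancel_left]

theorem sum_sl2Character_sub_mem_schurPositive (hv : v ≠ 0) {e : ℤ} (he : -1 ≤ e) (c m : ℕ) :
    ∑ i ∈ range (m + 1), ∑ j ∈ range (c + 1), sl2Character v (e + 6 * c + 3 * i - 4 * j)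
      - sl2Character v (e + 2 * c) ∈ schurPositive v := by
  have h_last : e + 6 * c + 3 * (0 : ℕ) - 4 * c = e + 2 * c := by
    push_cast
    ring
  rw [sum_range_succ', sum_range_succ _ c, h_last, ← add_assoc, add_sub_cancel_right]
  exact add_mem
    (sum_mem fun i _ => sum_sl2Character_sub_four_mul_mem_schurPositive hv (by omega))
    (sum_sl2Character_sub_four_mul_mem_schurPositive hv (by omega))

theorem weightSum_sl2Character_mem_schurPositive (hv : v ≠ 0) (hv4 : v ^ 4 ≠ 1) {e : ℤ}
    {c m : ℕ} (he : -1 ≤ e) (hem : 0 ≤ e + m) :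
    weightSum (sl2Character v) e c m ∈ schurPositive v := by
  rw [weightSum_sl2Character hv hv4, add_assoc]
  refine add_mem (sum_mem fun d _ => add_mem
    (sum_sl2Character_sub_four_mul_mem_schurPositive hv (by omega))
    (sum_sl2Character_sub_four_mul_mem_schurPositive hv (by omega))) ?_
  obtain rfl | he' := he.eq_or_lt
  · -- The term `i = 0`, `j = c` of the last sum compensates the negative middle sum.
    obtain ⟨m, rfl⟩ : ∃ n, m = n + 1 := ⟨m - 1, by omega⟩
    rw [sum_sl2Character_neg_one_add_mul_sq hv hv4, neg_add_eq_sub]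
    exact sum_sl2Character_sub_mem_schurPositive hv he c m
  · exact add_mem (sum_sl2Character_add_mul_sq_mem_schurPositive hv hv4 (by omega) c)
      (sum_mem fun i _ => sum_sl2Character_sub_four_mul_mem_schurPositive hv (by omega))

/-- The value at `v` of the Laurent polynomial with natural number coefficients `f`. -/
def laurentEval (v : K) : (ℤ →₀ ℕ) →+ K :=
  Finsupp.liftAddHom fun k => (AddMonoidHom.mulRight (v ^ k)).comp (Nat.castAddMonoidHom K)

theorem laurentEval_apply (v : K) (f : ℤ →₀ ℕ) :
    laurentEval v f = ∑ k ∈ f.support, (f k : K) * v ^ k :=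
  rfl

theorem laurentEval_single_one (v : K) (k : ℤ) :
    laurentEval v (Finsupp.single k 1) = v ^ k := by
  simp [laurentEval]

/-- The coefficient sequences that are symmetric about degree `0` and unimodal separately in even
and in odd degrees. -/
def symmetricUnimodal : AddSubmonoid (ℤ →₀ ℕ) where
  carrier := {f | (∀ k, f k = f (-k)) ∧ ∀ k, 0 ≤ k → f (k + 2) ≤ f k}
  zero_mem' := ⟨fun _ => rfl, fun _ _ => le_rfl⟩
  add_mem' hf hg :=
    ⟨fun k => congrArg₂ (· + ·) (hf.1 k) (hg.1 k),
      fun k hk => add_le_add (hf.2 k hk) (hg.2 k hk)⟩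

/-- The weight multiplicities of the irreducible representation of `SL₂` of highest weight `n`. -/
def sl2Weights (n : ℕ) : ℤ →₀ ℕ :=
  ∑ i ∈ range (n + 1), Finsupp.single ((n : ℤ) - 2 * i) 1

theorem sl2Weights_neg (n : ℕ) (k : ℤ) : sl2Weights n (-k) = sl2Weights n k := by
  rw [sl2Weights, Finsupp.finsetSum_apply, Finsupp.finsetSum_apply, ← sum_range_reflect]
  refine sum_congr rfl fun i hi => ?_
  rw [mem_range] at hi
  have h_reflect : (n : ℤ) - 2 * (n + 1 - 1 - i : ℕ) = -k ↔ (n : ℤ) - 2 * i = k := by omega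
  simp only [Finsupp.single_apply, h_reflect]

theorem sl2Weights_add_two_le (n : ℕ) {k : ℤ} (hk : 0 ≤ k) :
    sl2Weights n (k + 2) ≤ sl2Weights n k := by
  rw [sl2Weights, Finsupp.finsetSum_apply, Finsupp.finsetSum_apply, sum_range_succ,
    sum_range_succ']
  have h_last : Finsupp.single ((n : ℤ) - 2 * n) 1 (k + 2) = 0 :=
    Finsupp.single_eq_of_ne (by omega)
  rw [h_last, add_zero]
  refine le_add_right (sum_le_sum fun i _ => ?_)
  have h_shift : (n : ℤ) - 2 * i = k + 2 ↔ (n : ℤ) - 2 * (i + 1 : ℕ) = k := by omega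
  simp only [Finsupp.single_apply, h_shift, le_refl]

theorem sl2Weights_mem_symmetricUnimodal (n : ℕ) : sl2Weights n ∈ symmetricUnimodal :=
  ⟨fun k => (sl2Weights_neg n k).symm, fun _ => sl2Weights_add_two_le n⟩

theorem laurentEval_sl2Weights (hv : v ≠ 0) (hv2 : v ^ 2 ≠ 1) (n : ℕ) :
    laurentEval v (sl2Weights n) = sl2Character v n := by
  rw [sl2Weights, map_sum, sl2Character_natCast hv hv2]
  simp only [laurentEval_single_one]

theorem schurPositive_le_map_laurentEval (hv : v ≠ 0) (hv2 : v ^ 2 ≠ 1) :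
    schurPositive v ≤ symmetricUnimodal.map (laurentEval v) := by
  rw [schurPositive, AddSubmonoid.closure_le]
  rintro _ ⟨n, rfl⟩
  exact ⟨sl2Weights n, sl2Weights_mem_symmetricUnimodal n, laurentEval_sl2Weights hv hv2 n⟩

end SchurPositivity

theorem F₃_specialization_unimodal_general {K : Type*} [Field K] {v : K} (hv : v ≠ 0)
    (hv3 : v ^ 3 ≠ 1) (hv4 : v ^ 4 ≠ 1) (a b c : ℤ) (hc : 0 ≤ c)
    (hab : b ≤ a + 1) (hac : c ≤ a + 1) (hbc : c ≤ b + 1) :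
    ∃ (s : Finset ℤ) (coef : ℤ → ℕ),
      (∀ k : ℤ, k ∉ s → coef k = 0) ∧
      (∀ k : ℤ, coef k = coef (-k)) ∧
      (∀ k : ℤ, 0 ≤ k → coef (k + 2) ≤ coef k) ∧
      F₃ a b c v v⁻¹ = ∑ k ∈ s, (coef k : K) * v ^ k := by
  have hv2 : v ^ 2 ≠ 1 := sq_ne_one_of_pow_four_ne_one hv4
  lift c to ℕ using hc
  obtain ⟨m, hm⟩ := Int.eq_ofNat_of_zero_le (sub_nonneg.2 hbc)
  obtain rfl : b = c + m - 1 := by omega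
  obtain ⟨e, rfl⟩ : ∃ e, a = e + (c + m - 1) := ⟨_, (sub_add_cancel a _).symm⟩
  have h_pos : weightSum (sl2Character v) e c m ∈ schurPositive v :=
    weightSum_sl2Character_mem_schurPositive hv hv4 (by omega) (by omega)
  obtain ⟨f, ⟨h_symm, h_unimodal⟩, h_eval⟩ := schurPositive_le_map_laurentEval hv hv2 h_pos
  refine ⟨f.support, f, fun _ => Finsupp.notMem_support_iff.1, h_symm, h_unimodal, ?_⟩
  rw [F₃_eq_weightSum_sl2Character hv hv3 hv4, ← h_eval, laurentEval_apply]

theorem u_ne_zero : u ≠ 0 := by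
  rw [u, Ne, FaithfulSMul.algebraMap_eq_zero_iff]
  exact Polynomial.X_ne_zero

theorem u_pow_ne_one {n : ℕ} (hn : n ≠ 0) : u ^ n ≠ 1 := by
  rw [u, ← map_pow, Ne, FaithfulSMul.algebraMap_eq_one_iff]
  intro h
  have h_degree := congrArg Polynomial.natDegree h
  rw [Polynomial.natDegree_X_pow, Polynomial.natDegree_one] at h_degree
  exact hn h_degree

theorem F₃_specialization_unimodal (a b c : ℤ) (ha : 0 ≤ a) (hb : 0 ≤ b) (hc : 0 ≤ c)
    (hab : b ≤ a + 1) (hac : c ≤ a + 1) (hbc : c ≤ b + 1) :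
    ∃ (s : Finset ℤ) (coef : ℤ → ℕ),
      (∀ k : ℤ, k ∉ s → coef k = 0) ∧
      (∀ k : ℤ, coef k = coef (-k)) ∧
      (∀ k : ℤ, 0 ≤ k → coef (k + 2) ≤ coef k) ∧
      F₃ a b c u u⁻¹ = ∑ k ∈ s, (coef k : K1) * u ^ k := by
  exact F₃_specialization_unimodal_general u_ne_zero (u_pow_ne_one three_ne_zero)
    (u_pow_ne_one four_ne_zero) a b c hc hab hac hbc
end
end

section
/- Let a, b, c be nonnegative integers with a ≥ b−1 and a, b ≥ c−1. The map Ψ(E,F) = (E+F−ε^{EF}, F+ε^{EF}) restricts to a bijection from the set of tail index pairs onto the set of pseudohead index pairs, with inverse (i,j) ↦ (i−j+2ε_{ij}, j−ε_{ij}); moreover, whenever Ψ(E,F) = (i,j) the area ranges coincide: R^{EF} = R_{ij}. -/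
/-- `⌈m/2⌉` for an integer `m`, computed as `⌊(m+1)/2⌋`. -/
def ceilHalf (m : ℤ) : ℤ := Int.fdiv (m + 1) 2

/-- `ε^{EF} = max(0, E+2F−b−c)` for tails. -/
def epsT (b c E F : ℤ) : ℤ := max 0 (E + 2 * F - b - c)

/-- `δ^{EF} = ⌈(E+F−a)/2⌉` for tails. -/
def delT (a E F : ℤ) : ℤ := ceilHalf (E + F - a)

/-- `(E,F)` is a tail index pair. -/
def IsTail (a b c E F : ℤ) : Prop :=
  0 ≤ F ∧ F ≤ c - epsT b c E F ∧ 2 * epsT b c E F ≤ E ∧ E ≤ F + a ∧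
    4 * E + 5 * F - 3 * epsT b c E F ≤ a + 3 * b + 3 * c

/-- `ε_{ij} = max(0, i+j−b−c)` for pseudoheads. -/
def epsP (b c i j : ℤ) : ℤ := max 0 (i + j - b - c)

/-- `δ_{ij} = ⌈(i+ε_{ij}−a)/2⌉` for pseudoheads. -/
def delP (a b c i j : ℤ) : ℤ := ceilHalf (i + epsP b c i j - a)

/-- `(i,j)` is a pseudohead index pair. -/
def IsPseudohead (a b c i j : ℤ) : Prop :=
  0 ≤ j ∧ j ≤ c ∧ j ≤ i ∧ i ≤ b + c ∧ 4 * i + j ≤ a + 3 * b + 3 * c ∧ i - 2 * j ≤ a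

/-! Write `Ψ(E,F) = (i,j)`. Since `i + j = E + 2F`, and `ε` depends on nothing else, both sides
have the same `ε`; this makes `Ψ` a permutation of `ℤ × ℤ` with the stated inverse. After
substitution the two systems of inequalities differ in two places only. `0 ≤ F` reads `ε ≤ j`,
which by definition of `ε` as a maximum splits into `0 ≤ j` and `i ≤ b + c`. In the same way
`E ≤ F + a` reads `i - 2j + 3ε ≤ a`, which splits into `i - 2j ≤ a` and `4i + j ≤ a + 3b + 3c`; the
latter is also the last tail inequality. For the areas, `i + ε = E + F` gives both sides the same
`δ`, and `2i + j = 2E + 3F - ε`. -/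

theorem epsP_eq_epsT_of_add_eq {b c E F i j : ℤ} (h : i + j = E + 2 * F) :
    epsP b c i j = epsT b c E F := by
  rw [epsP, epsT, h]

theorem epsP_add_sub_epsT (b c E F : ℤ) :
    epsP b c (E + F - epsT b c E F) (F + epsT b c E F) = epsT b c E F :=
  epsP_eq_epsT_of_add_eq (by ring)

theorem epsT_sub_add_epsP (b c i j : ℤ) :
    epsT b c (i - j + 2 * epsP b c i j) (j - epsP b c i j) = epsP b c i j :=
  (epsP_eq_epsT_of_add_eq (by ring)).symm

/-- The map `Ψ` from tail indices to pseudohead indices together with its inverse, as a permutation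
of all of `ℤ × ℤ` rather than only of the index pairs. -/
def tailPseudoheadEquiv (b c : ℤ) : ℤ × ℤ ≃ ℤ × ℤ where
  toFun p := (p.1 + p.2 - epsT b c p.1 p.2, p.2 + epsT b c p.1 p.2)
  invFun p := (p.1 - p.2 + 2 * epsP b c p.1 p.2, p.2 - epsP b c p.1 p.2)
  left_inv p := by
    ext <;> simp only [epsP_add_sub_epsT] <;> ring
  right_inv p := by
    ext <;> simp only [epsT_sub_add_epsP] <;> ring

theorem epsP_le_iff {b c i j : ℤ} : epsP b c i j ≤ j ↔ 0 ≤ j ∧ i ≤ b + c := by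
  rw [epsP, max_le_iff]
  refine and_congr_right' ?_
  constructor <;> intro h <;> linarith

theorem sub_add_three_mul_epsP_le_iff {a b c i j : ℤ} :
    i - 2 * j + 3 * epsP b c i j ≤ a ↔ i - 2 * j ≤ a ∧ 4 * i + j ≤ a + 3 * b + 3 * c := by
  rw [epsP, mul_max_of_nonneg _ _ zero_le_three, ← max_add_add_left, max_le_iff]
  refine and_congr ?_ ?_ <;> constructor <;> intro h <;> linarith

theorem isPseudohead_iff_epsP {a b c i j : ℤ} :
    IsPseudohead a b c i j ↔
      epsP b c i j ≤ j ∧ j ≤ c ∧ j ≤ i ∧ i - 2 * j + 3 * epsP b c i j ≤ a ∧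
        4 * i + j ≤ a + 3 * b + 3 * c := by
  rw [epsP_le_iff, sub_add_three_mul_epsP_le_iff, IsPseudohead]
  tauto

theorem isTail_iff_isPseudohead (a b c E F : ℤ) :
    IsTail a b c E F ↔ IsPseudohead a b c (E + F - epsT b c E F) (F + epsT b c E F) := by
  rw [isPseudohead_iff_epsP, epsP_add_sub_epsT, IsTail]
  refine and_congr ?_ (and_congr ?_ (and_congr ?_ (and_congr ?_ ?_))) <;>
    constructor <;> intro h <;> linarith

theorem bijOn_tailPseudoheadEquiv (a b c : ℤ) :
    Set.BijOn (tailPseudoheadEquiv b c) {p : ℤ × ℤ | IsTail a b c p.1 p.2}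
      {p : ℤ × ℤ | IsPseudohead a b c p.1 p.2} :=
  (tailPseudoheadEquiv b c).bijOn fun p => (isTail_iff_isPseudohead a b c p.1 p.2).symm

theorem delP_add_sub_epsT (a b c E F : ℤ) :
    delP a b c (E + F - epsT b c E F) (F + epsT b c E F) = delT a E F := by
  rw [delP, delT, epsP_add_sub_epsT, sub_add_cancel]

theorem tail_minArea_eq_pseudohead_minArea {b c E F i j : ℤ}
    (h : tailPseudoheadEquiv b c (E, F) = (i, j)) : E + F = i + epsP b c i j := by
  obtain ⟨rfl, rfl⟩ := Prod.mk.inj h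
  rw [epsP_add_sub_epsT, sub_add_cancel]

theorem tail_maxArea_eq_pseudohead_maxArea (a : ℤ) {b c E F i j : ℤ}
    (h : tailPseudoheadEquiv b c (E, F) = (i, j)) :
    a + 2 * b + 3 * c - 2 * E - 3 * F + max (epsT b c E F) (delT a E F) =
      a + 2 * b + 3 * c - 2 * i - j + max 0 (delP a b c i j - epsP b c i j) := by
  obtain ⟨rfl, rfl⟩ := Prod.mk.inj h
  have hmax : max 0 (delT a E F - epsT b c E F) =
      max (epsT b c E F) (delT a E F) - epsT b c E F := by
    rw [← max_sub_sub_right, sub_self]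
  rw [delP_add_sub_epsT, epsP_add_sub_epsT, hmax]
  ring

theorem tails_to_pseudoheads_general (a b c : ℤ) :
    Set.BijOn (fun p : ℤ × ℤ => (p.1 + p.2 - epsT b c p.1 p.2, p.2 + epsT b c p.1 p.2))
        {p : ℤ × ℤ | IsTail a b c p.1 p.2} {p : ℤ × ℤ | IsPseudohead a b c p.1 p.2} ∧
    Set.InvOn (fun p : ℤ × ℤ => (p.1 - p.2 + 2 * epsP b c p.1 p.2, p.2 - epsP b c p.1 p.2))
        (fun p : ℤ × ℤ => (p.1 + p.2 - epsT b c p.1 p.2, p.2 + epsT b c p.1 p.2))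
        Set.univ Set.univ ∧
    ∀ E F i j : ℤ, (E + F - epsT b c E F, F + epsT b c E F) = (i, j) →
      E + F = i + epsP b c i j ∧
        a + 2 * b + 3 * c - 2 * E - 3 * F + max (epsT b c E F) (delT a E F)
          = a + 2 * b + 3 * c - 2 * i - j + max 0 (delP a b c i j - epsP b c i j) :=
  ⟨bijOn_tailPseudoheadEquiv a b c, (tailPseudoheadEquiv b c).symm.invOn,
    fun _ _ _ _ h =>
      ⟨tail_minArea_eq_pseudohead_minArea h, tail_maxArea_eq_pseudohead_maxArea a h⟩⟩

theorem tails_to_pseudoheads (a b c : ℤ) (ha : 0 ≤ a) (hb : 0 ≤ b) (hc : 0 ≤ c)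
    (hab : b - 1 ≤ a) (hac : c - 1 ≤ a) (hbc : c - 1 ≤ b) :
    Set.BijOn (fun p : ℤ × ℤ => (p.1 + p.2 - epsT b c p.1 p.2, p.2 + epsT b c p.1 p.2))
        {p : ℤ × ℤ | IsTail a b c p.1 p.2} {p : ℤ × ℤ | IsPseudohead a b c p.1 p.2} ∧
    Set.InvOn (fun p : ℤ × ℤ => (p.1 - p.2 + 2 * epsP b c p.1 p.2, p.2 - epsP b c p.1 p.2))
        (fun p : ℤ × ℤ => (p.1 + p.2 - epsT b c p.1 p.2, p.2 + epsT b c p.1 p.2))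
        {p : ℤ × ℤ | IsTail a b c p.1 p.2} {p : ℤ × ℤ | IsPseudohead a b c p.1 p.2} ∧
    ∀ E F i j : ℤ, IsTail a b c E F →
      (E + F - epsT b c E F, F + epsT b c E F) = (i, j) →
        E + F = i + epsP b c i j ∧
          a + 2 * b + 3 * c - 2 * E - 3 * F + max (epsT b c E F) (delT a E F)
            = a + 2 * b + 3 * c - 2 * i - j + max 0 (delP a b c i j - epsP b c i j) := by
  obtain ⟨hbij, hinv, harea⟩ := tails_to_pseudoheads_general a b c
  exact ⟨hbij, hinv.mono (Set.subset_univ _) (Set.subset_univ _), fun E F i j _ => harea E F i j⟩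
end

section
/- Let a, b, c be nonnegative integers with a ≥ b−1 and a, b ≥ c−1. Let P⁺ be the set of pseudohead index pairs (i,j) with δ_{ij} > ε_{ij}, and let H⁺ = {(k,ℓ) ∈ ℤ² : a < ℓ ≤ k < b+c}. Then the map Θ(i,j) = (i+j−δ_{ij}, i+ε_{ij}) restricts to a bijection from P⁺ onto H⁺, with inverse (k,ℓ) ↦ (ℓ−ε_k^ℓ, k−ℓ+ε_k^ℓ+δ_k^ℓ) where δ_k^ℓ = ⌈(ℓ−a)/2⌉ and ε_k^ℓ = max(0, k+δ_k^ℓ−b−c); moreover, whenever Θ(i,j) = (k,ℓ) the area ranges coincide: R_{ij} = [ℓ, A−k−ℓ]. In addition, no pseudohead index pair (i,j) with δ_{ij} ≤ ε_{ij} gives a triple (i,i,j) of the form (m,m,0) with (m,m) ∈ H⁺. -/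
/-- `δ_k^ℓ = ⌈(ℓ−a)/2⌉` for positive heads. -/
def delH (a l : ℤ) : ℤ := ceilHalf (l - a)

/-- `ε_k^ℓ = max(0, k+δ_k^ℓ−b−c)` for positive heads. -/
def epsH (a b c k l : ℤ) : ℤ := max 0 (k + delH a l - b - c)

/-!
`Θ` is a bijection of all of `ℤ²`: at corresponding points `i + j = k + δ` and `ℓ = i + ε`, so
the pseudohead and head versions of `δ` and `ε` agree. The inequalities `4i + j ≤ a + 3b + 3c`
and `i - 2j ≤ a` together say that `δ + ε ≤ j`, which is `ℓ ≤ k`, and `ε < δ` says that `a < ℓ`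
and `k < b + c`. The remaining bounds on a positive pseudohead follow because `ε < δ` means
`a + ε < i`, which with `i + j - b - c ≤ ε` gives `j < b + c - a`.
-/

section CeilHalf

variable {m n : ℤ}

theorem ceilHalf_le_iff : ceilHalf m ≤ n ↔ m ≤ 2 * n := by
  rw [ceilHalf, Int.fdiv_eq_ediv_of_nonneg _ zero_le_two]
  omega

theorem lt_ceilHalf_iff : n < ceilHalf m ↔ 2 * n < m := by
  simpa only [not_le] using ceilHalf_le_iff.not

end CeilHalf

section Theta

variable (a b c i j k l : ℤ)

theorem delH_add_epsP : delH a (i + epsP b c i j) = delP a b c i j := rfl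

theorem epsH_sub_delP_add_epsP :
    epsH a b c (i + j - delP a b c i j) (i + epsP b c i j) = epsP b c i j := by
  rw [epsH, delH_add_epsP, sub_add_cancel, epsP]

theorem epsP_sub_epsH_add_delH :
    epsP b c (l - epsH a b c k l) (k - l + epsH a b c k l + delH a l) = epsH a b c k l := by
  have hsum : l - epsH a b c k l + (k - l + epsH a b c k l + delH a l) = k + delH a l := by ring
  rw [epsP, hsum, epsH]

theorem delP_sub_epsH_add_delH :
    delP a b c (l - epsH a b c k l) (k - l + epsH a b c k l + delH a l) = delH a l := by
  rw [delP, epsP_sub_epsH_add_delH, sub_add_cancel, delH]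

/-- The map `Θ(i, j) = (i + j - δ_{ij}, i + ε_{ij})` from pseudohead to head indices, as a
permutation of all of `ℤ²`; its inverse is `(k, ℓ) ↦ (ℓ - ε_k^ℓ, k - ℓ + ε_k^ℓ + δ_k^ℓ)`. -/
def pseudoheadEquivHead : ℤ × ℤ ≃ ℤ × ℤ where
  toFun p := (p.1 + p.2 - delP a b c p.1 p.2, p.1 + epsP b c p.1 p.2)
  invFun p := (p.2 - epsH a b c p.1 p.2, p.1 - p.2 + epsH a b c p.1 p.2 + delH a p.2)
  left_inv := by
    rintro ⟨i, j⟩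
    ext <;> simp only [epsH_sub_delP_add_epsP, delH_add_epsP] <;> ring
  right_inv := by
    rintro ⟨k, l⟩
    ext <;> simp only [epsP_sub_epsH_add_delH, delP_sub_epsH_add_delH] <;> ring

end Theta

/-- The set `P⁺` of pseudohead index pairs with `δ_{ij} > ε_{ij}`. -/
def positivePseudoheads (a b c : ℤ) : Set (ℤ × ℤ) :=
  {p | IsPseudohead a b c p.1 p.2 ∧ epsP b c p.1 p.2 < delP a b c p.1 p.2}

/-- The set `H⁺` of index pairs `(k, ℓ)` of positive heads. -/
def positiveHeads (a b c : ℤ) : Set (ℤ × ℤ) :=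
  {p | a < p.2 ∧ p.2 ≤ p.1 ∧ p.1 < b + c}

section Pseudoheads

variable {a b c i j : ℤ}

theorem delP_add_epsP_le_iff :
    delP a b c i j + epsP b c i j ≤ j ↔ 4 * i + j ≤ a + 3 * b + 3 * c ∧ i - 2 * j ≤ a := by
  rw [← le_sub_iff_add_le, delP, ceilHalf_le_iff, epsP]
  omega

theorem epsP_lt_delP_iff :
    epsP b c i j < delP a b c i j ↔ a < i + epsP b c i j ∧ i + j - delP a b c i j < b + c := by
  have hpos : 0 < delP a b c i j ↔ a < i + epsP b c i j := by
    rw [delP, lt_ceilHalf_iff, mul_zero, sub_pos]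
  have hsub : i + j - b - c < delP a b c i j ↔ i + j - delP a b c i j < b + c := by
    constructor <;> intro h <;> linarith
  rw [← hpos, ← hsub]
  exact max_lt_iff

theorem isPseudohead_of_epsP_lt_delP (hab : b - 1 ≤ a) (habc : b + c ≤ 2 * a + 2)
    (hlt : epsP b c i j < delP a b c i j) (hle : delP a b c i j + epsP b c i j ≤ j) :
    IsPseudohead a b c i j := by
  have heps_nonneg : 0 ≤ epsP b c i j := le_max_left _ _
  have heps : i + j - b - c ≤ epsP b c i j := le_max_right _ _
  have hi : a + epsP b c i j < i := by
    rw [delP, lt_ceilHalf_iff] at hlt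
    linarith
  have hj : j < b + c - a := by linarith
  exact ⟨by linarith, by linarith [hj], by linarith [hj], by linarith, delP_add_epsP_le_iff.1 hle⟩

theorem pseudoheadEquivHead_mem_positiveHeads_iff (hab : b - 1 ≤ a) (habc : b + c ≤ 2 * a + 2)
    (p : ℤ × ℤ) :
    pseudoheadEquivHead a b c p ∈ positiveHeads a b c ↔ p ∈ positivePseudoheads a b c := by
  obtain ⟨i, j⟩ := p
  have hle : i + epsP b c i j ≤ i + j - delP a b c i j ↔
      delP a b c i j + epsP b c i j ≤ j := by
    constructor <;> intro h <;> linarith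
  constructor
  · rintro ⟨hal, hlk, hkbc⟩
    have hlt := epsP_lt_delP_iff.2 ⟨hal, hkbc⟩
    exact ⟨isPseudohead_of_epsP_lt_delP hab habc hlt (hle.1 hlk), hlt⟩
  · rintro ⟨⟨_, _, _, _, hij⟩, hlt⟩
    obtain ⟨hal, hkbc⟩ := epsP_lt_delP_iff.1 hlt
    exact ⟨hal, hle.2 (delP_add_epsP_le_iff.2 hij), hkbc⟩

theorem pseudohead_areaRange_eq {k l : ℤ} (A : ℤ) (hle : epsP b c i j ≤ delP a b c i j)
    (hkl : pseudoheadEquivHead a b c (i, j) = (k, l)) :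
    i + epsP b c i j = l ∧
      A - 2 * i - j + max 0 (delP a b c i j - epsP b c i j) = A - k - l := by
  obtain ⟨rfl, rfl⟩ := Prod.mk.inj hkl
  refine ⟨rfl, ?_⟩
  rw [max_eq_right (sub_nonneg.2 hle)]
  ring

theorem IsPseudohead.diag_notMem_positiveHeads (h : IsPseudohead a b c i 0) :
    (i, i) ∉ positiveHeads a b c := by
  obtain ⟨_, _, _, _, _, hi⟩ := h
  rintro ⟨hai, _⟩
  dsimp only at hai
  linarith

end Pseudoheads

theorem pseudoheads_to_heads_general (a b c : ℤ) (hab : b - 1 ≤ a)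
    (habc : b + c ≤ 2 * a + 2) :
    Set.BijOn (pseudoheadEquivHead a b c) (positivePseudoheads a b c) (positiveHeads a b c) ∧
    Set.InvOn (pseudoheadEquivHead a b c).symm (pseudoheadEquivHead a b c)
      (positivePseudoheads a b c) (positiveHeads a b c) ∧
    (∀ i j k l : ℤ, epsP b c i j ≤ delP a b c i j →
      pseudoheadEquivHead a b c (i, j) = (k, l) →
        i + epsP b c i j = l ∧
          a + 2 * b + 3 * c - 2 * i - j + max 0 (delP a b c i j - epsP b c i j)
            = a + 2 * b + 3 * c - k - l) ∧
    (∀ m : ℤ, IsPseudohead a b c m 0 → (m, m) ∉ positiveHeads a b c) := by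
  set Θ := pseudoheadEquivHead a b c
  exact ⟨Θ.bijOn (pseudoheadEquivHead_mem_positiveHeads_iff hab habc),
    ⟨Θ.left_inv.leftInvOn _, Θ.right_inv.rightInvOn _⟩,
    fun _ _ _ _ => pseudohead_areaRange_eq _, fun _ => IsPseudohead.diag_notMem_positiveHeads⟩

theorem pseudoheads_to_heads (a b c : ℤ) (ha : 0 ≤ a) (hb : 0 ≤ b) (hc : 0 ≤ c)
    (hab : b - 1 ≤ a) (hac : c - 1 ≤ a) (hbc : c - 1 ≤ b) :
    Set.BijOn (fun p : ℤ × ℤ => (p.1 + p.2 - delP a b c p.1 p.2, p.1 + epsP b c p.1 p.2))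
        {p : ℤ × ℤ | IsPseudohead a b c p.1 p.2 ∧ epsP b c p.1 p.2 < delP a b c p.1 p.2}
        {p : ℤ × ℤ | a < p.2 ∧ p.2 ≤ p.1 ∧ p.1 < b + c} ∧
    Set.InvOn
        (fun p : ℤ × ℤ =>
          (p.2 - epsH a b c p.1 p.2, p.1 - p.2 + epsH a b c p.1 p.2 + delH a p.2))
        (fun p : ℤ × ℤ => (p.1 + p.2 - delP a b c p.1 p.2, p.1 + epsP b c p.1 p.2))
        {p : ℤ × ℤ | IsPseudohead a b c p.1 p.2 ∧ epsP b c p.1 p.2 < delP a b c p.1 p.2}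
        {p : ℤ × ℤ | a < p.2 ∧ p.2 ≤ p.1 ∧ p.1 < b + c} ∧
    (∀ i j k l : ℤ,
      IsPseudohead a b c i j → epsP b c i j < delP a b c i j →
        (i + j - delP a b c i j, i + epsP b c i j) = (k, l) →
          i + epsP b c i j = l ∧
            a + 2 * b + 3 * c - 2 * i - j + max 0 (delP a b c i j - epsP b c i j)
              = a + 2 * b + 3 * c - k - l) ∧
    (∀ i j : ℤ, IsPseudohead a b c i j → delP a b c i j ≤ epsP b c i j → j = 0 →
      ¬(a < i ∧ i < b + c)) := by
  obtain ⟨hbij, hinv, harea, hdiag⟩ := pseudoheads_to_heads_general a b c hab (by linarith)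
  exact ⟨hbij, hinv, fun i j k l _ hlt => harea i j k l hlt.le,
    fun i _ h _ hj hi => hdiag i (hj ▸ h) ⟨hi.1, le_rfl, hi.2⟩⟩
end

section
/- Let a, b, c be nonnegative integers with a ≥ b−1 and a, b ≥ c−1. Then the set Λ of all subpartitions of λ(a,b,c) is the disjoint union, over all tail index pairs (E,F), of the chains C(T^{EF}); moreover, for each tail index pair (E,F) and each integer m in the area range R^{EF} = [E+F, A−2E−3F+max(ε^{EF}, δ^{EF})], there is exactly one element μ ∈ C(T^{EF}) with area(μ) = m, and C(T^{EF}) contains no element of any other area. -/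
/-- The set `Λ` of subpartitions of `λ(a,b,c) = (a+b+c, b+c, c)`. -/
def Lam (a b c : ℤ) : Set (ℤ × ℤ × ℤ) :=
  {μ | 0 ≤ μ.2.2 ∧ μ.2.2 ≤ μ.2.1 ∧ μ.2.1 ≤ μ.1 ∧ μ.1 ≤ a + b + c ∧
    μ.2.1 ≤ b + c ∧ μ.2.2 ≤ c}

/-- The area of a subpartition: `area(μ) = A − (x+y+z)` with `A = a+2b+3c`. -/
def area (a b c : ℤ) (μ : ℤ × ℤ × ℤ) : ℤ :=
  a + 2 * b + 3 * c - (μ.1 + μ.2.1 + μ.2.2)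

/-- The string `S(P_{ij})` of the pseudohead `P_{ij} = (i,i,j)`. -/
def Sstring (a b c i j : ℤ) : Set (ℤ × ℤ × ℤ) :=
  {μ | (∃ x : ℤ, i ≤ x ∧ x < a + b + c - (i - j + 2 * epsP b c i j) ∧ μ = (x, i, j)) ∨
       (∃ y : ℤ, i ≤ y ∧ y < b + c - (j - epsP b c i j) ∧
          μ = (a + b + c - (i - j + 2 * epsP b c i j), y, j)) ∨
       (∃ z : ℤ, j ≤ z ∧ z ≤ c ∧
          μ = (a + b + c - (i - j + 2 * epsP b c i j), b + c - (j - epsP b c i j), z))}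

/-- The appendage `A(H_k^ℓ) = {(k,ℓ,z) : 0 ≤ z < min(b+c−k, ⌈(ℓ−a)/2⌉)}`. -/
def appendage (a b c k l : ℤ) : Set (ℤ × ℤ × ℤ) :=
  {μ | ∃ z : ℤ, 0 ≤ z ∧ z < min (b + c - k) (ceilHalf (l - a)) ∧ μ = (k, l, z)}

/-- The chain `C(T^{EF})` of a tail index pair `(E,F)`: the string of the pseudohead
`Ψ(E,F)`, together with the appendage of `Θ(Ψ(E,F))` when `δ > ε`. -/
def chain (a b c E F : ℤ) : Set (ℤ × ℤ × ℤ) :=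
  Sstring a b c (E + F - epsT b c E F) (F + epsT b c E F) ∪
    (if epsP b c (E + F - epsT b c E F) (F + epsT b c E F)
        < delP a b c (E + F - epsT b c E F) (F + epsT b c E F) then
      appendage a b c
        ((E + F - epsT b c E F) + (F + epsT b c E F)
          - delP a b c (E + F - epsT b c E F) (F + epsT b c E F))
        ((E + F - epsT b c E F) + epsP b c (E + F - epsT b c E F) (F + epsT b c E F))
    else ∅)

/-!
Within a chain the area increases by one from each point to the next: along the string the third,
then the second, then the first row of the partition shrinks one box at a time, and the appendage
continues the count by shrinking the third row once more. So the area maps each of these four legs,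
and hence the chain, bijectively onto an interval.

That the chains partition `Λ` is seen by inverting the construction. A subpartition tells from its
own coordinates on which kind of leg it can lie, and each leg determines `(E, F)`; this defines a
map `tailIndex` from `Λ` to tail index pairs, and the chains are its fibres.
-/

lemma ceilHalf_eq_ediv (m : ℤ) : ceilHalf m = (m + 1) / 2 :=
  Int.fdiv_eq_ediv_of_nonneg _ zero_le_two

lemma delT_eq_ediv (a E F : ℤ) : delT a E F = (E + F - a + 1) / 2 :=
  ceilHalf_eq_ediv _

lemma bijOn_union_Ico {α β : Type*} [LinearOrder β] {f : α → β} {s t : Set α} {l m n : β}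
    (hs : Set.BijOn f s (Set.Ico l m)) (ht : Set.BijOn f t (Set.Ico m n))
    (hlm : l ≤ m) (hmn : m ≤ n) : Set.BijOn f (s ∪ t) (Set.Ico l n) := by
  have images_disjoint : Disjoint (Set.Ico l m) (Set.Ico m n) := Set.Ico_disjoint_Ico_same
  have injOn : Set.InjOn f (s ∪ t) := by
    rintro x (hx | hx) y (hy | hy) hxy
    · exact hs.injOn hx hy hxy
    · exact (images_disjoint.ne_of_mem (hs.mapsTo hx) (ht.mapsTo hy) hxy).elim
    · exact (images_disjoint.ne_of_mem (hs.mapsTo hy) (ht.mapsTo hx) hxy.symm).elim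
    · exact ht.injOn hx hy hxy
  rw [← Set.Ico_union_Ico_eq_Ico hlm hmn]
  exact hs.union ht injOn

lemma bijOn_image_Ico_of_apply_eq_sub {α : Type*} {f : α → ℤ} {γ : ℤ → α} {k : ℤ}
    (hγ : ∀ t, f (γ t) = k - t) (u v : ℤ) :
    Set.BijOn f (γ '' Set.Ico u v) (Set.Ico (k - v + 1) (k - u + 1)) := by
  refine ⟨?_, ?_, fun m hm => ?_⟩
  · rintro _ ⟨t, ht, rfl⟩
    rw [hγ]
    simp only [Set.mem_Ico] at ht ⊢
    omega
  · rintro _ ⟨t, -, rfl⟩ _ ⟨t', -, rfl⟩ h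
    rw [hγ, hγ] at h
    rw [sub_right_injective h]
  · refine ⟨γ (k - m), Set.mem_image_of_mem γ ?_, by rw [hγ, sub_sub_cancel]⟩
    simp only [Set.mem_Ico] at hm ⊢
    omega

section Legs

variable (a b c E F : ℤ)

/-- The part of the chain `C(T^{EF})` along which the third row moves: the points `(p, q̄, z)`
of the string `S(P_{ij})`. -/
def thirdRowLeg : Set (ℤ × ℤ × ℤ) :=
  (fun z => (a + b + c - E, b + c - F, z)) '' Set.Ico (F + epsT b c E F) (c + 1)

/-- The part of the chain `C(T^{EF})` along which the second row moves: the points `(p, y, j)`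
of the string `S(P_{ij})`. -/
def secondRowLeg : Set (ℤ × ℤ × ℤ) :=
  (fun y => (a + b + c - E, y, F + epsT b c E F)) '' Set.Ico (E + F - epsT b c E F) (b + c - F)

/-- The part of the chain `C(T^{EF})` along which the first row moves: the points `(x, i, j)`
of the string `S(P_{ij})`. -/
def firstRowLeg : Set (ℤ × ℤ × ℤ) :=
  (fun x => (x, E + F - epsT b c E F, F + epsT b c E F)) ''
    Set.Ico (E + F - epsT b c E F) (a + b + c - E)

/-- The appendage `A(H_k^ℓ)` of the chain `C(T^{EF})` in terms of `(E,F)`, where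
`(k, ℓ) = (E + 2F - δ, E + F)`. It is empty unless `δ > ε`. -/
def tailAppendage : Set (ℤ × ℤ × ℤ) :=
  (fun z => (E + 2 * F - delT a E F, E + F, z)) '' Set.Ico 0 (delT a E F - epsT b c E F)

variable {a b c E F}

lemma mem_thirdRowLeg {x y z : ℤ} : (x, y, z) ∈ thirdRowLeg a b c E F ↔
    x = a + b + c - E ∧ y = b + c - F ∧ F + epsT b c E F ≤ z ∧ z ≤ c := by
  simp only [thirdRowLeg, Set.mem_image, Set.mem_Ico, Prod.mk.injEq]
  exact ⟨by rintro ⟨t, ht⟩; omega, fun h => ⟨z, by omega⟩⟩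

lemma mem_secondRowLeg {x y z : ℤ} : (x, y, z) ∈ secondRowLeg a b c E F ↔
    x = a + b + c - E ∧ z = F + epsT b c E F ∧ E + F - epsT b c E F ≤ y ∧ y < b + c - F := by
  simp only [secondRowLeg, Set.mem_image, Set.mem_Ico, Prod.mk.injEq]
  exact ⟨by rintro ⟨t, ht⟩; omega, fun h => ⟨y, by omega⟩⟩

lemma mem_firstRowLeg {x y z : ℤ} : (x, y, z) ∈ firstRowLeg a b c E F ↔
    y = E + F - epsT b c E F ∧ z = F + epsT b c E F ∧ y ≤ x ∧ x < a + b + c - E := by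
  simp only [firstRowLeg, Set.mem_image, Set.mem_Ico, Prod.mk.injEq]
  exact ⟨by rintro ⟨t, ht⟩; omega, fun h => ⟨x, by omega⟩⟩

lemma mem_tailAppendage {x y z : ℤ} : (x, y, z) ∈ tailAppendage a b c E F ↔
    x = E + 2 * F - delT a E F ∧ y = E + F ∧ 0 ≤ z ∧ z < delT a E F - epsT b c E F := by
  simp only [tailAppendage, Set.mem_image, Set.mem_Ico, Prod.mk.injEq]
  exact ⟨by rintro ⟨t, ht⟩; omega, fun h => ⟨z, by omega⟩⟩

end Legs

section ChainAsUnion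

variable (a b c E F : ℤ)

lemma epsP_pseudohead_eq_epsT :
    epsP b c (E + F - epsT b c E F) (F + epsT b c E F) = epsT b c E F := by
  unfold epsP epsT
  omega

lemma delP_pseudohead_eq_delT :
    delP a b c (E + F - epsT b c E F) (F + epsT b c E F) = delT a E F := by
  rw [delP, epsP_pseudohead_eq_epsT, sub_add_cancel, delT]

lemma Sstring_eq_union_legs :
    Sstring a b c (E + F - epsT b c E F) (F + epsT b c E F) =
      thirdRowLeg a b c E F ∪ secondRowLeg a b c E F ∪ firstRowLeg a b c E F := by
  ext ⟨x, y, z⟩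
  simp only [Sstring, epsP_pseudohead_eq_epsT, Set.mem_union, Set.mem_ofPred_eq, Prod.mk.injEq,
    mem_thirdRowLeg, mem_secondRowLeg, mem_firstRowLeg]
  constructor
  · rintro (⟨t, ht⟩ | ⟨t, ht⟩ | ⟨t, ht⟩)
    · exact Or.inr (by omega)
    · exact Or.inl (Or.inr (by omega))
    · exact Or.inl (Or.inl (by omega))
  · rintro ((h | h) | h)
    · exact Or.inr (Or.inr ⟨z, by omega⟩)
    · exact Or.inr (Or.inl ⟨y, by omega⟩)
    · exact Or.inl ⟨x, by omega⟩

lemma appendage_eq_tailAppendage :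
    appendage a b c (E + 2 * F - delT a E F) (E + F) = tailAppendage a b c E F := by
  have length_eq : min (b + c - (E + 2 * F - delT a E F)) (ceilHalf (E + F - a)) =
      delT a E F - epsT b c E F := by
    unfold delT epsT
    omega
  ext μ
  simp only [appendage, tailAppendage, length_eq, Set.mem_ofPred_eq, Set.mem_image, Set.mem_Ico,
    and_assoc, eq_comm]

lemma tailAppendage_eq_empty (h : delT a E F ≤ epsT b c E F) :
    tailAppendage a b c E F = ∅ := by
  rw [tailAppendage, Set.Ico_eq_empty (by omega), Set.image_empty]

lemma chain_eq_union_legs :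
    chain a b c E F = thirdRowLeg a b c E F ∪ secondRowLeg a b c E F ∪ firstRowLeg a b c E F ∪
      tailAppendage a b c E F := by
  have k_eq : E + F - epsT b c E F + (F + epsT b c E F) - delT a E F =
      E + 2 * F - delT a E F := by ring
  rw [chain, Sstring_eq_union_legs, epsP_pseudohead_eq_epsT, delP_pseudohead_eq_delT, k_eq,
    sub_add_cancel, appendage_eq_tailAppendage]
  split_ifs with h
  · rfl
  · rw [tailAppendage_eq_empty a b c E F (not_lt.mp h)]

end ChainAsUnion

section AreaRange

variable {a b c E F : ℤ}

lemma bijOn_area_thirdRowLeg : Set.BijOn (area a b c) (thirdRowLeg a b c E F)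
    (Set.Ico (E + F) (E + c - epsT b c E F + 1)) := by
  have area_eq (z : ℤ) : area a b c (a + b + c - E, b + c - F, z) = E + F + c - z := by
    simp only [area]
    ring
  convert! bijOn_image_Ico_of_apply_eq_sub area_eq _ _ using 2 <;> ring

lemma bijOn_area_secondRowLeg : Set.BijOn (area a b c) (secondRowLeg a b c E F)
    (Set.Ico (E + c - epsT b c E F + 1) (b + 2 * c - 2 * F + 1)) := by
  have area_eq (y : ℤ) : area a b c (a + b + c - E, y, F + epsT b c E F) =
      E + b + 2 * c - F - epsT b c E F - y := by
    simp only [area]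
    ring
  convert! bijOn_image_Ico_of_apply_eq_sub area_eq _ _ using 2 <;> ring

lemma bijOn_area_firstRowLeg : Set.BijOn (area a b c) (firstRowLeg a b c E F)
    (Set.Ico (b + 2 * c - 2 * F + 1) (a + 2 * b + 3 * c - 2 * E - 3 * F + epsT b c E F + 1)) := by
  have area_eq (x : ℤ) : area a b c (x, E + F - epsT b c E F, F + epsT b c E F) =
      a + 2 * b + 3 * c - E - 2 * F - x := by
    simp only [area]
    ring
  convert! bijOn_image_Ico_of_apply_eq_sub area_eq _ _ using 2 <;> ring

lemma bijOn_area_tailAppendage : Set.BijOn (area a b c) (tailAppendage a b c E F)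
    (Set.Ico (a + 2 * b + 3 * c - 2 * E - 3 * F + epsT b c E F + 1)
      (a + 2 * b + 3 * c - 2 * E - 3 * F + delT a E F + 1)) := by
  have area_eq (z : ℤ) : area a b c (E + 2 * F - delT a E F, E + F, z) =
      a + 2 * b + 3 * c - 2 * E - 3 * F + delT a E F - z := by
    simp only [area]
    ring
  convert! bijOn_image_Ico_of_apply_eq_sub area_eq _ _ using 2 <;> ring

lemma bijOn_area_string (h : IsTail a b c E F) : Set.BijOn (area a b c)
    (thirdRowLeg a b c E F ∪ secondRowLeg a b c E F ∪ firstRowLeg a b c E F)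
    (Set.Ico (E + F) (a + 2 * b + 3 * c - 2 * E - 3 * F + epsT b c E F + 1)) := by
  unfold IsTail at h
  have eps_eq : epsT b c E F = max 0 (E + 2 * F - b - c) := rfl
  have third_le : E + F ≤ E + c - epsT b c E F + 1 := by omega
  have second_le : E + c - epsT b c E F + 1 ≤ b + 2 * c - 2 * F + 1 := by omega
  have first_le : b + 2 * c - 2 * F + 1 ≤
      a + 2 * b + 3 * c - 2 * E - 3 * F + epsT b c E F + 1 := by omega
  exact bijOn_union_Ico
    (bijOn_union_Ico bijOn_area_thirdRowLeg bijOn_area_secondRowLeg third_le second_le)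
    bijOn_area_firstRowLeg (third_le.trans second_le) first_le

lemma bijOn_area_chain (h : IsTail a b c E F) : Set.BijOn (area a b c) (chain a b c E F)
    (Set.Icc (E + F)
      (a + 2 * b + 3 * c - 2 * E - 3 * F + max (epsT b c E F) (delT a E F))) := by
  rw [chain_eq_union_legs, ← Set.Ico_add_one_right_eq_Icc]
  rcases le_total (delT a E F) (epsT b c E F) with hle | hle
  · rw [tailAppendage_eq_empty a b c E F hle, Set.union_empty, max_eq_left hle]
    exact bijOn_area_string h
  · have string_le : E + F ≤ a + 2 * b + 3 * c - 2 * E - 3 * F + epsT b c E F + 1 := by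
      unfold IsTail epsT at *
      omega
    rw [max_eq_right hle]
    exact bijOn_union_Ico (bijOn_area_string h) bijOn_area_tailAppendage string_le (by omega)

lemma existsUnique_mem_chain_area_eq (h : IsTail a b c E F) {m : ℤ} (hm : E + F ≤ m)
    (hm' : m ≤ a + 2 * b + 3 * c - 2 * E - 3 * F + max (epsT b c E F) (delT a E F)) :
    ∃! μ : ℤ × ℤ × ℤ, μ ∈ chain a b c E F ∧ area a b c μ = m := by
  obtain ⟨μ, hμ, rfl⟩ := (bijOn_area_chain h).surjOn ⟨hm, hm'⟩
  exact ⟨μ, ⟨hμ, rfl⟩, fun ν ⟨hν, area_eq⟩ => (bijOn_area_chain h).injOn hν hμ area_eq⟩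

end AreaRange

section TailIndex

variable {a b c E F x y z : ℤ} {μ : ℤ × ℤ × ℤ}

/-- The index pair of the tail whose chain passes through a subpartition `(x, y, z)`, read off
from the leg on which the subpartition lies: in this order, the appendage `A(H_x^y)` and the legs
along which the first, second and third row moves. Each test is the upper bound on the moving
coordinate in the definition of that leg. The value is only meaningful on `Λ`. -/
def tailIndex (a b c : ℤ) : ℤ × ℤ × ℤ → ℤ × ℤ
  | (x, y, z) =>
    if z < min (b + c - x) (ceilHalf (y - a)) then
      (2 * y - x - ceilHalf (y - a), x - y + ceilHalf (y - a))
    else if x < a + b + c - (y - z + 2 * epsP b c y z) then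
      (y - z + 2 * epsP b c y z, z - epsP b c y z)
    else if y < b + c - z then
      (a + b + c - x, z)
    else
      (a + b + c - x, b + c - y)

lemma tailIndex_of_mem_tailAppendage (hμ : μ ∈ tailAppendage a b c E F) :
    tailIndex a b c μ = (E, F) := by
  obtain ⟨x, y, z⟩ := μ
  obtain ⟨rfl, rfl, -, hz⟩ := mem_tailAppendage.mp hμ
  have appended : z < min (b + c - (E + 2 * F - delT a E F)) (ceilHalf (E + F - a)) := by
    unfold delT epsT at *
    omega
  rw [tailIndex, if_pos appended, Prod.mk.injEq]
  unfold delT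
  constructor <;> ring

lemma tailIndex_of_mem_firstRowLeg (h : IsTail a b c E F) (hμ : μ ∈ firstRowLeg a b c E F) :
    tailIndex a b c μ = (E, F) := by
  obtain ⟨x, y, z⟩ := μ
  obtain ⟨rfl, rfl, hx, hx'⟩ := mem_firstRowLeg.mp hμ
  have not_appended : ¬ F + epsT b c E F <
      min (b + c - x) (ceilHalf (E + F - epsT b c E F - a)) := by
    rw [ceilHalf_eq_ediv]
    unfold IsTail epsT at *
    omega
  rw [tailIndex, if_neg not_appended, epsP_pseudohead_eq_epsT, if_pos (by omega), Prod.mk.injEq]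
  constructor <;> ring

lemma tailIndex_of_mem_secondRowLeg (h : IsTail a b c E F) (hμ : μ ∈ secondRowLeg a b c E F) :
    tailIndex a b c μ = (E, F) := by
  obtain ⟨x, y, z⟩ := μ
  obtain ⟨rfl, rfl, hy, hy'⟩ := mem_secondRowLeg.mp hμ
  have eps_eq_zero : epsT b c E F = 0 := by
    unfold epsT at *
    omega
  rw [IsTail, eps_eq_zero] at h
  rw [eps_eq_zero] at hy
  have not_appended : ¬ F < min (b + c - (a + b + c - E)) (ceilHalf (y - a)) := by omega
  have not_first : ¬ a + b + c - E < a + b + c - (y - F + 2 * epsP b c y F) := by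
    unfold epsP
    omega
  rw [eps_eq_zero, add_zero, tailIndex, if_neg not_appended, if_neg not_first, if_pos (by omega),
    sub_sub_cancel]

lemma tailIndex_of_mem_thirdRowLeg (h : IsTail a b c E F) (hμ : μ ∈ thirdRowLeg a b c E F) :
    tailIndex a b c μ = (E, F) := by
  obtain ⟨x, y, z⟩ := μ
  obtain ⟨rfl, rfl, hz, -⟩ := mem_thirdRowLeg.mp hμ
  have not_appended : ¬ z < min (b + c - (a + b + c - E)) (ceilHalf (b + c - F - a)) := by
    unfold IsTail epsT at *
    omega
  have not_first :
      ¬ a + b + c - E < a + b + c - (b + c - F - z + 2 * epsP b c (b + c - F) z) := by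
    unfold epsT epsP at *
    omega
  have not_second : ¬ b + c - F < b + c - z := by
    unfold epsT at hz
    omega
  rw [tailIndex, if_neg not_appended, if_neg not_first, if_neg not_second, sub_sub_cancel,
    sub_sub_cancel]

lemma tailIndex_of_mem_chain (h : IsTail a b c E F) (hμ : μ ∈ chain a b c E F) :
    tailIndex a b c μ = (E, F) := by
  rw [chain_eq_union_legs] at hμ
  rcases hμ with ((third | second) | first) | appended
  exacts [tailIndex_of_mem_thirdRowLeg h third, tailIndex_of_mem_secondRowLeg h second,
    tailIndex_of_mem_firstRowLeg h first, tailIndex_of_mem_tailAppendage appended]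

lemma isTail_of_isPseudohead {i j : ℤ} (h : IsPseudohead a b c i j) :
    IsTail a b c (i - j + 2 * epsP b c i j) (j - epsP b c i j) := by
  have eps_eq : epsT b c (i - j + 2 * epsP b c i j) (j - epsP b c i j) = epsP b c i j := by
    unfold epsT epsP
    omega
  rw [IsTail, eps_eq]
  unfold IsPseudohead epsP at *
  omega

lemma isPseudohead_of_lt_firstRowLeg_end (hμ : (x, y, z) ∈ Lam a b c)
    (not_appended : min (b + c - x) (ceilHalf (y - a)) ≤ z)
    (hx : x < a + b + c - (y - z + 2 * epsP b c y z)) : IsPseudohead a b c y z := by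
  simp only [Lam, Set.mem_ofPred_eq] at hμ
  rw [ceilHalf_eq_ediv] at not_appended
  unfold epsP at hx
  have y_sub_le : y - 2 * z ≤ a := by omega
  have weighted_sum_lt : x + 3 * y + z < a + 3 * b + 3 * c := by omega
  unfold IsPseudohead
  omega

lemma isTail_of_lt_appendage_end (hab : b - 1 ≤ a) (hac : c - 1 ≤ a) (hμ : (x, y, z) ∈ Lam a b c)
    (appended : z < min (b + c - x) (ceilHalf (y - a))) :
    IsTail a b c (2 * y - x - ceilHalf (y - a)) (x - y + ceilHalf (y - a)) := by
  simp only [Lam, Set.mem_ofPred_eq] at hμ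
  have eps_eq : epsT b c (2 * y - x - ceilHalf (y - a)) (x - y + ceilHalf (y - a)) =
      max 0 (x + ceilHalf (y - a) - b - c) := by
    rw [epsT]
    ring_nf
  have delta_bounds : y - a ≤ 2 * ceilHalf (y - a) ∧ 2 * ceilHalf (y - a) ≤ y - a + 1 := by
    rw [ceilHalf_eq_ediv]
    omega
  have delta_pos : 0 < ceilHalf (y - a) := by omega
  have x_lt : x < b + c := by omega
  rw [IsTail, eps_eq]
  refine ⟨?_, ?_, ?_, ?_, ?_⟩ <;> omega

lemma isTail_of_firstRowLeg_end_le (hμ : (x, y, z) ∈ Lam a b c)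
    (not_appended : min (b + c - x) (ceilHalf (y - a)) ≤ z)
    (hx : a + b + c - (y - z + 2 * epsP b c y z) ≤ x) (hy : y < b + c - z) :
    IsTail a b c (a + b + c - x) z := by
  simp only [Lam, Set.mem_ofPred_eq] at hμ
  rw [ceilHalf_eq_ediv] at not_appended
  unfold epsP at hx
  have le_x_add_z : b + c ≤ x + z := by omega
  have eps_eq_zero : epsT b c (a + b + c - x) z = 0 := by
    unfold epsT
    omega
  rw [IsTail, eps_eq_zero]
  omega

lemma isTail_of_secondRowLeg_end_le (hμ : (x, y, z) ∈ Lam a b c)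
    (hx : a + b + c - (y - z + 2 * epsP b c y z) ≤ x) (hy : b + c - z ≤ y) :
    IsTail a b c (a + b + c - x) (b + c - y) := by
  simp only [Lam, Set.mem_ofPred_eq] at hμ
  unfold epsP at hx
  have le_weighted_sum : a + 3 * b + 3 * c ≤ x + 3 * y + z := by omega
  unfold IsTail epsT
  refine ⟨?_, ?_, ?_, ?_, ?_⟩ <;> omega

lemma isTail_tailIndex (hab : b - 1 ≤ a) (hac : c - 1 ≤ a) (hμ : μ ∈ Lam a b c) :
    IsTail a b c (tailIndex a b c μ).1 (tailIndex a b c μ).2 := by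
  obtain ⟨x, y, z⟩ := μ
  simp only [tailIndex]
  split_ifs with hz hx hy
  · exact isTail_of_lt_appendage_end hab hac hμ hz
  · exact isTail_of_isPseudohead (isPseudohead_of_lt_firstRowLeg_end hμ (not_lt.mp hz) hx)
  · exact isTail_of_firstRowLeg_end_le hμ (not_lt.mp hz) (not_lt.mp hx) hy
  · exact isTail_of_secondRowLeg_end_le hμ (not_lt.mp hx) (not_lt.mp hy)

lemma mem_chain_tailIndex (hμ : μ ∈ Lam a b c) :
    μ ∈ chain a b c (tailIndex a b c μ).1 (tailIndex a b c μ).2 := by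
  obtain ⟨x, y, z⟩ := μ
  simp only [Lam, Set.mem_ofPred_eq] at hμ
  simp only [chain_eq_union_legs, tailIndex]
  split_ifs with hz hx hy
  · refine Or.inr (mem_tailAppendage.mpr ?_)
    rw [delT_eq_ediv, epsT]
    rw [ceilHalf_eq_ediv] at *
    omega
  · refine Or.inl (Or.inr (mem_firstRowLeg.mpr ?_))
    unfold epsT epsP at *
    omega
  · refine Or.inl (Or.inl (Or.inr (mem_secondRowLeg.mpr ?_)))
    rw [ceilHalf_eq_ediv] at hz
    unfold epsT epsP at *
    omega
  · refine Or.inl (Or.inl (Or.inl (mem_thirdRowLeg.mpr ?_)))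
    unfold epsT epsP at *
    omega

lemma chain_subset_Lam (hbc : c - 1 ≤ b) (h : IsTail a b c E F) :
    chain a b c E F ⊆ Lam a b c := by
  rintro ⟨x, y, z⟩ hμ
  simp only [chain_eq_union_legs, Set.mem_union, mem_thirdRowLeg, mem_secondRowLeg,
    mem_firstRowLeg, mem_tailAppendage, delT_eq_ediv] at hμ
  unfold IsTail epsT at *
  simp only [Lam, Set.mem_ofPred_eq]
  rcases hμ with ((third | second) | first) | appended <;> omega

end TailIndex

theorem chain_decomposition (a b c : ℤ) (ha : 0 ≤ a) (hb : 0 ≤ b) (hc : 0 ≤ c)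
    (hab : b - 1 ≤ a) (hac : c - 1 ≤ a) (hbc : c - 1 ≤ b) :
    (∀ μ : ℤ × ℤ × ℤ, μ ∈ Lam a b c ↔
      ∃ p : ℤ × ℤ, IsTail a b c p.1 p.2 ∧ μ ∈ chain a b c p.1 p.2) ∧
    (∀ p p' : ℤ × ℤ, IsTail a b c p.1 p.2 → IsTail a b c p'.1 p'.2 → p ≠ p' →
      Disjoint (chain a b c p.1 p.2) (chain a b c p'.1 p'.2)) ∧
    (∀ E F : ℤ, IsTail a b c E F → ∀ m : ℤ,
      E + F ≤ m →
      m ≤ a + 2 * b + 3 * c - 2 * E - 3 * F + max (epsT b c E F) (delT a E F) →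
        ∃! μ : ℤ × ℤ × ℤ, μ ∈ chain a b c E F ∧ area a b c μ = m) ∧
    (∀ E F : ℤ, IsTail a b c E F → ∀ μ ∈ chain a b c E F,
      E + F ≤ area a b c μ ∧
        area a b c μ
          ≤ a + 2 * b + 3 * c - 2 * E - 3 * F + max (epsT b c E F) (delT a E F)) := by
  refine ⟨fun μ => ⟨fun hμ => ?_, ?_⟩, fun p p' hp hp' hne => ?_, ?_, ?_⟩
  · exact ⟨tailIndex a b c μ, isTail_tailIndex hab hac hμ, mem_chain_tailIndex hμ⟩
  · rintro ⟨p, hp, hμ⟩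
    exact chain_subset_Lam hbc hp hμ
  · refine Set.disjoint_left.mpr fun μ hμ hμ' => hne ?_
    exact (tailIndex_of_mem_chain hp hμ).symm.trans (tailIndex_of_mem_chain hp' hμ')
  · exact fun E F h m hm hm' => existsUnique_mem_chain_area_eq h hm hm'
  · exact fun E F h μ hμ => (bijOn_area_chain h).mapsTo hμ
end
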